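/- arXiv:1605.04323 — 2 statements merged into one kernel-verified Lean document; each statement's English description precedes it below -/
import Mathlib

section
/- There is an absolute constant C₂ > 0 such that for every integer d ≥ 2 and every ψ with 0 < ψ < arccos(d^{−1/2}), the unit sphere S^{d−1} ⊆ ℝ^d can be covered by at most C₂·(cos ψ / sin^{d−1} ψ)·(d−1)^{3/2}·ln(1 + (d−1)cos²ψ) spherical balls of geodesic radius ψ; moreover this bound is at most C₂·(√d/ψ)^{d−1}·(d−1)^{3/2}·ln(d). -/
open MeasureTheory ProbabilityTheory
open RealInnerProductSpace

lemma sc_gauss_tail (x : ℝ) (hx : 0 ≤ x) :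
    ENNReal.ofReal (Real.exp (-x^2/2) / (30 * (1 + x))) ≤ gaussianReal 0 1 (Set.Ioi x) := by
  have hd : 0 < 1 / (1 + x) := by positivity
  have hd1 : 1 / (1 + x) ≤ 1 := by rw [div_le_one (by positivity)]; linarith
  have hxd : x * (1 / (1 + x)) ≤ 1 := by rw [mul_one_div, div_le_one (by positivity)]; linarith
  set δ := 1 / (1 + x) with hδ
  have h0 : gaussianReal 0 1 (Set.Ioc x (x + δ)) ≤ gaussianReal 0 1 (Set.Ioi x) :=
    measure_mono Set.Ioc_subset_Ioi_self
  refine le_trans ?_ h0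
  rw [gaussianReal_apply_eq_integral _ (by norm_num)]
  apply ENNReal.ofReal_le_ofReal
  have hconst : ∫ _ in Set.Ioc x (x + δ), (Real.exp (-x^2/2) / 30) ∂volume
      = Real.exp (-x^2/2) / (30 * (1 + x)) := by
    rw [setIntegral_const]
    rw [Real.volume_real_Ioc_of_le (by linarith), hδ, smul_eq_mul]
    field_simp
    ring
  rw [← hconst]
  apply setIntegral_mono_on
  · exact integrableOn_const (by simp)
  · exact (integrable_gaussianPDFReal 0 1).integrableOn
  · exact measurableSet_Ioc
  intro y hy
  rw [gaussianPDFReal]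
  have hpi : Real.sqrt (2 * Real.pi * (1:NNReal)) ≤ 3 := by
    rw [Real.sqrt_le_left (by norm_num)]
    have := Real.pi_lt_d2
    norm_num; linarith
  have hpos : 0 < Real.sqrt (2 * Real.pi * (1:NNReal)) := by
    apply Real.sqrt_pos.2; have := Real.pi_pos; norm_num; positivity
  have hinv : (1:ℝ)/3 ≤ (Real.sqrt (2 * Real.pi * (1:NNReal)))⁻¹ := by
    rw [← one_div]; exact one_div_le_one_div_of_le hpos hpi
  have he : Real.exp (-x^2/2) * (1/10) ≤ Real.exp (-(y - 0)^2 / (2 * (1:NNReal))) := by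
    have h1 : (1:ℝ)/10 ≤ Real.exp (-(3/2)) := by
      rw [Real.exp_neg, ← one_div]
      apply one_div_le_one_div_of_le (Real.exp_pos _)
      have : Real.exp (3/2) ^ 2 = Real.exp 1 ^ 3 := by
        rw [← Real.exp_nat_mul, ← Real.exp_nat_mul]; norm_num
      have h3 := Real.exp_one_lt_d9
      have h4 : Real.exp 1 ^ 3 ≤ 3 ^ 3 := by
        apply pow_le_pow_left₀ (Real.exp_pos _).le; linarith
      nlinarith [Real.exp_pos (3/2)]
    calc _ ≤ Real.exp (-x^2/2) * Real.exp (-(3/2)) := by gcongr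
      _ = Real.exp (-x^2/2 + -(3/2)) := by rw [Real.exp_add]
      _ ≤ _ := by
        apply Real.exp_le_exp.2
        have := hy.1; have := hy.2
        push_cast
        nlinarith
  calc Real.exp (-x^2/2) / 30 = 1/3 * (Real.exp (-x^2/2) * (1/10)) := by ring
    _ ≤ _ := by gcongr

lemma sc_inv_le (x m : ℝ) (hx : 0 ≤ x) (hm : 0 < m) :
    Real.exp (-x^2/(2*m^2)) / (1 + m) ≤ 1 / (1 + x) := by
  rw [div_le_div_iff₀ (by positivity) (by positivity)]
  rw [one_mul]
  by_cases h : x ≤ m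
  · have : Real.exp (-x^2/(2*m^2)) ≤ 1 := by
      apply Real.exp_le_one_iff.2
      have : 0 ≤ x^2/(2*m^2) := by positivity
      rw [neg_div]; linarith
    nlinarith
  · push Not at h
    set r := x / m with hr
    have hxr : x = r * m := by rw [hr]; field_simp
    have hr1 : 1 ≤ r := by rw [hr, le_div_iff₀ hm]; linarith
    have h1 : -x^2/(2*m^2) = -(r^2/2) := by rw [hxr]; field_simp
    rw [h1, Real.exp_neg]
    have h2 : r ≤ Real.exp (r^2/2) := by
      have := Real.add_one_le_exp (r^2/2)
      nlinarith [sq_nonneg (r-1)]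
    rw [inv_mul_le_iff₀ (Real.exp_pos _)]
    calc 1 + x ≤ r * (1 + m) := by rw [hxr]; linarith
      _ ≤ _ := by gcongr

lemma sc_gauss_int (κ : ℝ) (hκ : 0 ≤ κ) :
    ∫ z, Real.exp (-κ * z^2) ∂(gaussianReal 0 1) = 1 / Real.sqrt (1 + 2*κ) := by
  rw [integral_gaussianReal_eq_integral_smul (by norm_num)]
  simp only [gaussianPDFReal, smul_eq_mul]
  have : ∀ z : ℝ, (Real.sqrt (2 * Real.pi * (1:NNReal)))⁻¹ * Real.exp (-(z - 0)^2 / (2 * (1:NNReal)))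
     * Real.exp (-κ * z^2) = (Real.sqrt (2 * Real.pi))⁻¹ * Real.exp (-(κ + 1/2) * z^2) := by
    intro z
    rw [mul_assoc, ← Real.exp_add]
    push_cast
    congr 2
    · ring_nf
    · ring_nf
  simp_rw [this]
  rw [integral_const_mul, integral_gaussian, ← Real.sqrt_inv, ← Real.sqrt_mul (by positivity), one_div (Real.sqrt _),
    ← Real.sqrt_inv]
  congr 1
  have := Real.pi_pos
  field_simp
  ring

lemma sc_prod_lower (n : ℕ) (hn : 1 ≤ n) (σ : ℝ) (h0 : 0 < σ) (h1 : σ < 1) :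
    ENNReal.ofReal (Real.sqrt (1 - σ^2) ^ n / (100 * (1 + Real.sqrt n * σ))) ≤
    ((gaussianReal 0 1).prod (Measure.pi fun _ : Fin n => gaussianReal 0 1))
      {p : ℝ × (Fin n → ℝ) | σ * Real.sqrt (p.1^2 + ∑ i, p.2 i ^ 2) < p.1} := by
  have hn' : (1:ℝ) ≤ n := by exact_mod_cast hn
  have hs : 0 < 1 - σ^2 := by nlinarith
  have hsq : 0 < Real.sqrt (1 - σ^2) := Real.sqrt_pos.2 hs
  have hsn : 0 < Real.sqrt n := Real.sqrt_pos.2 (by linarith)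
  set m := Real.sqrt n * σ with hm
  have hmpos : 0 < m := by positivity
  set τ := σ / Real.sqrt (1 - σ^2) with hτ
  have hτpos : 0 < τ := by positivity
  have hτ2 : τ^2 * (1 - σ^2) = σ^2 := by
    rw [hτ, div_pow, Real.sq_sqrt hs.le]; field_simp
  have hm2 : m^2 = n * σ^2 := by rw [hm, mul_pow, Real.sq_sqrt (by linarith)]
  have hmeas : MeasurableSet {p : ℝ × (Fin n → ℝ) | σ * Real.sqrt (p.1^2 + ∑ i, p.2 i ^ 2) < p.1} := by
    apply measurableSet_lt
    · fun_prop
    · fun_prop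
  rw [Measure.prod_apply_symm hmeas]
  set κ := τ^2 * (1 + 1/m^2) / 2 with hκ
  have hκpos : 0 < κ := by positivity
  have hbound : ∀ z : Fin n → ℝ, ENNReal.ofReal (1/(30*(1+m)) * ∏ i, Real.exp (-κ * z i^2)) ≤
      gaussianReal 0 1 ((fun x => (x, z)) ⁻¹' {p : ℝ × (Fin n → ℝ) | σ * Real.sqrt (p.1^2 + ∑ i, p.2 i ^ 2) < p.1}) := by
    intro z
    set R := ∑ i, z i ^ 2 with hR
    have hR0 : 0 ≤ R := Finset.sum_nonneg fun i _ => sq_nonneg _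
    have hsub : Set.Ioi (τ * Real.sqrt R) ⊆ ((fun x => (x, z)) ⁻¹' {p : ℝ × (Fin n → ℝ) | σ * Real.sqrt (p.1^2 + ∑ i, p.2 i ^ 2) < p.1}) := by
      intro y hy
      simp only [Set.mem_Ioi] at hy
      simp only [Set.mem_preimage, Set.mem_ofPred_eq]
      have hy0 : 0 < y := lt_of_le_of_lt (by positivity) hy
      have hy2 : τ^2 * R < y^2 := by
        have : (τ * Real.sqrt R)^2 < y^2 := pow_lt_pow_left₀ hy (by positivity) (by norm_num)
        rwa [mul_pow, Real.sq_sqrt hR0] at this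
      apply lt_of_pow_lt_pow_left₀ 2 hy0.le
      rw [mul_pow, Real.sq_sqrt (by positivity)]
      rw [← hR]
      have : σ^2 * R = (1 - σ^2) * (τ^2 * R) := by rw [← mul_assoc, mul_comm (1 - σ^2), hτ2]
      nlinarith
    refine le_trans ?_ (measure_mono hsub)
    refine le_trans ?_ (sc_gauss_tail _ (by positivity))
    apply ENNReal.ofReal_le_ofReal
    have h2 := sc_inv_le (τ * Real.sqrt R) m (by positivity) hmpos
    rw [← Real.exp_sum, ← Finset.mul_sum, ← hR]
    have h3 : -κ * R = -(τ * Real.sqrt R)^2/2 + -(τ * Real.sqrt R)^2/(2*m^2) := by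
      rw [mul_pow, Real.sq_sqrt hR0, hκ]; field_simp; ring
    rw [h3, Real.exp_add]
    calc _ = Real.exp (-(τ * Real.sqrt R)^2/2) / 30 * (Real.exp (-(τ * Real.sqrt R)^2/(2*m^2)) / (1+m)) := by
          field_simp
      _ ≤ Real.exp (-(τ * Real.sqrt R)^2/2) / 30 * (1 / (1 + τ * Real.sqrt R)) := by gcongr
      _ = _ := by field_simp
  refine le_trans ?_ (lintegral_mono hbound)
  rw [← ofReal_integral_eq_lintegral_ofReal]
  · apply ENNReal.ofReal_le_ofReal
    rw [integral_const_mul, integral_fintype_prod_eq_pow (fun z => Real.exp (-κ * z^2)), sc_gauss_int κ hκpos.le, Fintype.card_fin]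
    have h4 : 1 + 2 * κ = (1 + 1/n) / (1 - σ^2) := by
      rw [eq_div_iff hs.ne', hκ, hm2]
      have : (1 + 2 * (τ^2 * (1 + 1 / (n * σ^2)) / 2)) * (1 - σ^2) =
        (1 - σ^2) + (τ^2 * (1-σ^2)) * (1 + 1 / (n * σ^2)) := by ring
      rw [this, hτ2]; field_simp; ring
    have h5 : Real.sqrt (1 - σ^2) / (1 + 1/n) ≤ 1 / Real.sqrt (1 + 2 * κ) := by
      rw [h4, Real.sqrt_div (by positivity), one_div_div]
      gcongr
      rw [Real.sqrt_le_left (by positivity)]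
      have : 0 < 1 / (n:ℝ) := by positivity
      nlinarith
    have h6 : (1 + 1/(n:ℝ))^n ≤ 3 := by
      have := Real.add_one_le_exp (1/(n:ℝ))
      calc (1 + 1/(n:ℝ))^n ≤ (Real.exp (1/n))^n := by
            apply pow_le_pow_left₀ (by positivity); linarith
        _ = Real.exp 1 := by rw [← Real.exp_nat_mul]; congr 1; field_simp
        _ ≤ 3 := by have := Real.exp_one_lt_d9; linarith
    calc Real.sqrt (1 - σ^2)^n / (100 * (1 + m)) ≤ 1/(30*(1+m)) * (Real.sqrt (1 - σ^2)^n / 3) := by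
          rw [div_mul_div_comm, one_mul]
          apply div_le_div_of_nonneg_left (by positivity) (by positivity)
          nlinarith
      _ ≤ 1/(30*(1+m)) * (Real.sqrt (1 - σ^2)^n / (1 + 1/(n:ℝ))^n) := by gcongr
      _ ≤ _ := by rw [← div_pow]; gcongr
  · apply Integrable.const_mul
    apply Integrable.fintype_prod (f := fun _ z => Real.exp (-κ * z^2))
    intro i
    apply Integrable.of_bound (C := 1) (by fun_prop)
    filter_upwards with z
    rw [Real.norm_eq_abs, abs_of_pos (Real.exp_pos _)]
    apply Real.exp_le_one_iff.2
    nlinarith [sq_nonneg z]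
  · filter_upwards with z
    positivity

/-- Open cone over the cap with axis `v` and cosine `σ`. -/
def scCap {d : ℕ} (v : EuclideanSpace ℝ (Fin d)) (σ : ℝ) : Set (EuclideanSpace ℝ (Fin d)) :=
  {x | σ * ‖x‖ < ⟪v, x⟫}

lemma scCap_meas {d : ℕ} (v : EuclideanSpace ℝ (Fin d)) (σ : ℝ) : MeasurableSet (scCap v σ) := by
  apply measurableSet_lt
  · fun_prop
  · fun_prop

lemma scCap_rot {d : ℕ} (v w : EuclideanSpace ℝ (Fin d)) (hv : ‖v‖ = 1) (hw : ‖w‖ = 1) (σ : ℝ) :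
    (stdGaussian (EuclideanSpace ℝ (Fin d))) (scCap v σ) = (stdGaussian _) (scCap w σ) := by
  set f := (ℝ ∙ (v - w))ᗮ.reflection with hf
  have h : f v = w := Submodule.reflection_sub (by rw [hv, hw])
  conv_rhs => rw [← stdGaussian_map f]
  rw [Measure.map_apply (by fun_prop) (scCap_meas _ _)]
  congr 1
  ext x
  simp only [scCap, Set.mem_ofPred_eq, Set.mem_preimage]
  rw [← h]
  simp

lemma scCap_lower (n : ℕ) (hn : 1 ≤ n) (σ : ℝ) (h0 : 0 < σ) (h1 : σ < 1)
    (v : EuclideanSpace ℝ (Fin (n+1))) (hv : ‖v‖ = 1) :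
    Real.sqrt (1 - σ^2) ^ n / (100 * (1 + Real.sqrt n * σ)) ≤
     (stdGaussian (EuclideanSpace ℝ (Fin (n+1)))).real (scCap v σ) := by
  have h := sc_prod_lower n hn σ h0 h1
  have e : ((gaussianReal 0 1).prod (Measure.pi fun _ : Fin n => gaussianReal 0 1))
      {p : ℝ × (Fin n → ℝ) | σ * Real.sqrt (p.1^2 + ∑ i, p.2 i ^ 2) < p.1} =
      (stdGaussian (EuclideanSpace ℝ (Fin (n+1)))) (scCap v σ) := by
    rw [scCap_rot v (EuclideanSpace.single 0 1) hv (by simp), ← map_pi_eq_stdGaussian,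
      Measure.map_apply (by fun_prop) (scCap_meas _ _),
      ← (measurePreserving_piFinSuccAbove (fun _ : Fin (n+1) => gaussianReal 0 1) 0).measure_preimage]
    · congr 1
      ext x
      simp [scCap, EuclideanSpace.norm_eq, Fin.sum_univ_succ, MeasurableEquiv.piFinSuccAbove, Fin.tail, EuclideanSpace.inner_single_left]
    · apply MeasurableSet.nullMeasurableSet
      apply measurableSet_lt
      · fun_prop
      · fun_prop
  rw [e] at h
  rw [Measure.real]
  apply (ENNReal.ofReal_le_iff_le_toReal (by finiteness)).1 h

/-- At least half of a cap lies in each half-space containing it in the appropriate sense. -/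
lemma scCap_half {d : ℕ} (v x : EuclideanSpace ℝ (Fin d)) (hv : ‖v‖ = 1) (σ α s : ℝ) (hσ : 0 < σ)
    (hα : 0 < α) (hx : α ≤ ⟪v, x⟫) (hs : s ≤ α * σ) :
    (stdGaussian (EuclideanSpace ℝ (Fin d))).real (scCap v σ) / 2 ≤
    (stdGaussian (EuclideanSpace ℝ (Fin d))).real (scCap v σ ∩ {u | s * ‖u‖ < ⟪x, u⟫}) := by
  set w := x - ⟪v, x⟫ • v with hw
  have hvw : ⟪v, w⟫ = 0 := by
    rw [hw, inner_sub_right, inner_smul_right, real_inner_self_eq_norm_sq, hv]; ring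
  set f := (ℝ ∙ w)ᗮ.reflection with hf
  have hfv : f v = v := by
    apply Submodule.reflection_mem_subspace_eq_self
    rw [Submodule.mem_orthogonal_singleton_iff_inner_right, real_inner_comm]
    exact hvw
  have hfw : f w = -w := Submodule.reflection_orthogonalComplement_singleton_eq_neg w
  set Ap := scCap v σ ∩ {u | 0 ≤ ⟪w, u⟫} with hAp
  set Am := scCap v σ ∩ {u | ⟪w, u⟫ ≤ 0} with hAm
  have hmp : MeasurableSet Ap := (scCap_meas _ _).inter (measurableSet_le (by fun_prop) (by fun_prop))
  have hpm : (stdGaussian (EuclideanSpace ℝ (Fin d))).real Ap = (stdGaussian _).real Am := by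
    rw [Measure.real, Measure.real]
    congr 1
    conv_lhs => rw [← stdGaussian_map f]
    rw [Measure.map_apply (by fun_prop) hmp]
    congr 1
    ext u
    have e1 : ⟪v, f u⟫ = ⟪v, u⟫ := by
      conv_lhs => rw [← hfv]
      simp
    have e2 : ⟪w, f u⟫ = -⟪w, u⟫ := by
      have : w = f (-w) := by rw [map_neg, hfw, neg_neg]
      conv_lhs => rw [this]
      rw [LinearIsometryEquiv.inner_map_map, inner_neg_left]
    simp only [hAp, hAm, scCap, Set.mem_preimage, Set.mem_inter_iff, Set.mem_ofPred_eq, e1, e2,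
      LinearIsometryEquiv.norm_map]
    simp
  have hun : scCap v σ ⊆ Ap ∪ Am := by
    intro u hu
    rcases le_total 0 ⟪w, u⟫ with h | h
    · exact Or.inl ⟨hu, h⟩
    · exact Or.inr ⟨hu, h⟩
  have h1 : (stdGaussian (EuclideanSpace ℝ (Fin d))).real (scCap v σ) ≤
      (stdGaussian _).real Ap + (stdGaussian _).real Am :=
    (measureReal_mono hun).trans (measureReal_union_le _ _)
  have hsub : Ap ⊆ scCap v σ ∩ {u | s * ‖u‖ < ⟪x, u⟫} := by
    rintro u ⟨hu, hu2⟩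
    refine ⟨hu, ?_⟩
    simp only [scCap, Set.mem_ofPred_eq] at hu hu2 ⊢
    have hxw : x = ⟪v, x⟫ • v + w := by rw [hw]; abel
    have e : ⟪x, u⟫ = ⟪v, x⟫ * ⟪v, u⟫ + ⟪w, u⟫ := by
      conv_lhs => rw [hxw]
      rw [inner_add_left, real_inner_smul_left]
    rw [e]
    have hn := norm_nonneg u
    have h3 : 0 < ⟪v, u⟫ := lt_of_le_of_lt (by positivity) hu
    calc s * ‖u‖ ≤ α * σ * ‖u‖ := by gcongr
      _ = α * (σ * ‖u‖) := by ring
      _ < α * ⟪v, u⟫ := by gcongr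
      _ ≤ ⟪v, x⟫ * ⟪v, u⟫ := by gcongr
      _ ≤ _ := by linarith
  have h2 := measureReal_mono (μ := stdGaussian (EuclideanSpace ℝ (Fin d))) hsub
  linarith

/-- Feasible set of a linear system. -/
def scQ {d : ℕ} (v' : EuclideanSpace ℝ (Fin d)) (α s : ℝ) (F : Set (EuclideanSpace ℝ (Fin d))) :
    Set (EuclideanSpace ℝ (Fin d)) :=
  {x | α ≤ ⟪v', x⟫ ∧ ∀ t ∈ F, ⟪t, x⟫ ≤ s}

open Classical in
/-- The point of minimal norm (if there is one). -/
noncomputable def scX {d : ℕ} (Q : Set (EuclideanSpace ℝ (Fin d))) : EuclideanSpace ℝ (Fin d) :=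
  if h : ∃ x ∈ Q, ∀ y ∈ Q, ‖x‖ ≤ ‖y‖ then h.choose else 0

lemma scX_eq {d : ℕ} (Q : Set (EuclideanSpace ℝ (Fin d))) (hQ : Convex ℝ Q)
    (x : EuclideanSpace ℝ (Fin d)) (hx : x ∈ Q) (hmin : ∀ y ∈ Q, ‖x‖ ≤ ‖y‖) : scX Q = x := by
  have h : ∃ x ∈ Q, ∀ y ∈ Q, ‖x‖ ≤ ‖y‖ := ⟨x, hx, hmin⟩
  rw [scX, dif_pos h]
  obtain ⟨h1, h2⟩ := h.choose_spec
  set y := h.choose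
  have hmid : (1/2:ℝ) • y + (1/2:ℝ) • x ∈ Q := hQ h1 hx (by norm_num) (by norm_num) (by norm_num)
  have h3 := hmin _ hmid
  rw [← smul_add, norm_smul] at h3
  have h4 : ‖y‖ = ‖x‖ := le_antisymm (h2 _ hx) (hmin _ h1)
  have h5 := parallelogram_law_with_norm ℝ y x
  rw [h4] at h5
  norm_num at h3
  have h6 : ‖y - x‖ * ‖y - x‖ ≤ 0 := by nlinarith [norm_nonneg x, norm_nonneg (y + x)]
  have h7 : ‖y - x‖ = 0 := by nlinarith [norm_nonneg (y - x)]
  exact sub_eq_zero.1 (norm_eq_zero.1 h7)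

lemma sc_halfspace_convex {d : ℕ} (t : EuclideanSpace ℝ (Fin d)) (s : ℝ) :
    Convex ℝ {x : EuclideanSpace ℝ (Fin d) | ⟪t, x⟫ ≤ s} :=
  convex_halfSpace_le (innerSL ℝ t).isLinear s

lemma sc_halfspace_convex' {d : ℕ} (t : EuclideanSpace ℝ (Fin d)) (s : ℝ) :
    Convex ℝ {x : EuclideanSpace ℝ (Fin d) | s ≤ ⟪t, x⟫} :=
  convex_halfSpace_ge (innerSL ℝ t).isLinear s

lemma scQ_eq {d : ℕ} (v' : EuclideanSpace ℝ (Fin d)) (α s : ℝ) (F : Set (EuclideanSpace ℝ (Fin d))) :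
    scQ v' α s F = {x | α ≤ ⟪v', x⟫} ∩ ⋂ t ∈ F, {x | ⟪t, x⟫ ≤ s} := by
  ext x; simp [scQ]

lemma scQ_convex {d : ℕ} (v' : EuclideanSpace ℝ (Fin d)) (α s : ℝ) (F : Set (EuclideanSpace ℝ (Fin d))) :
    Convex ℝ (scQ v' α s F) := by
  rw [scQ_eq]
  exact (sc_halfspace_convex' _ _).inter (convex_iInter₂ fun t _ => sc_halfspace_convex t s)

lemma scQ_closed {d : ℕ} (v' : EuclideanSpace ℝ (Fin d)) (α s : ℝ) (F : Set (EuclideanSpace ℝ (Fin d))) :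
    IsClosed (scQ v' α s F) := by
  rw [scQ_eq]
  refine IsClosed.inter (isClosed_le (by fun_prop) (by fun_prop)) ?_
  exact isClosed_biInter fun t _ => isClosed_le (by fun_prop) (by fun_prop)

lemma sc_helly {d N : ℕ} (a : Fin N → EuclideanSpace ℝ (Fin d)) (v v' : EuclideanSpace ℝ (Fin d))
    (J : Finset (Fin N)) (α s : ℝ) (hv : α ≤ ⟪v', v⟫) (hvs : ∀ j ∈ J, ⟪a j, v⟫ ≤ s) :
    ∃ I ⊆ J, I.card ≤ d + 1 ∧ ‖scX (scQ v' α s (a '' I))‖ ≤ ‖v‖ ∧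
      α ≤ ⟪v', scX (scQ v' α s (a '' I))⟫ ∧ ∀ j ∈ J, ⟪a j, scX (scQ v' α s (a '' I))⟫ ≤ s := by
  classical
  have hvQ : v ∈ scQ v' α s (a '' J) := by
    refine ⟨hv, ?_⟩
    rintro _ ⟨j, hj, rfl⟩
    exact hvs j hj
  obtain ⟨x, hxQ, hxd⟩ := (scQ_closed v' α s (a '' J)).exists_infDist_eq_dist ⟨v, hvQ⟩ 0
  have hmin : ∀ y ∈ scQ v' α s (a '' J), ‖x‖ ≤ ‖y‖ := by
    intro y hy
    have := Metric.infDist_le_dist_of_mem (x := 0) hy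
    rw [hxd, dist_zero_left, dist_zero_left] at this
    exact this
  let F : Option (Fin N) → Set (EuclideanSpace ℝ (Fin d)) := fun o =>
    match o with
    | none => {y | α ≤ ⟪v', y⟫} ∩ Metric.ball 0 ‖x‖
    | some j => {y | ⟪a j, y⟫ ≤ s}
  have hconv : ∀ o ∈ Finset.insertNone J, Convex ℝ (F o) := by
    rintro (_ | j) _
    · exact (sc_halfspace_convex' _ _).inter (convex_ball _ _)
    · exact sc_halfspace_convex _ _
  have hempty : ¬ (⋂ o ∈ Finset.insertNone J, F o).Nonempty := by
    rintro ⟨y, hy⟩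
    simp only [Set.mem_iInter] at hy
    have hn := hy none (by simp)
    have hyQ : y ∈ scQ v' α s (a '' J) := by
      refine ⟨hn.1, ?_⟩
      rintro _ ⟨j, hj, rfl⟩
      exact hy (some j) (by simpa using hj)
    have := hmin y hyQ
    have h2 := hn.2
    rw [mem_ball_zero_iff] at h2
    linarith
  have hex : ∃ I' ⊆ Finset.insertNone J, I'.card ≤ d + 1 ∧ ¬ (⋂ o ∈ I', F o).Nonempty := by
    by_contra hcon
    push Not at hcon
    apply hempty
    apply Convex.helly_theorem' (𝕜 := ℝ) hconv
    intro I hI hc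
    rw [finrank_euclideanSpace_fin] at hc
    exact Set.nonempty_iff_ne_empty.2 (fun h => (hcon I hI hc).ne_empty h)
  obtain ⟨I', hI'J, hcard, hne⟩ := hex
  refine ⟨Finset.eraseNone I', ?_, ?_, ?_⟩
  · intro i hi
    rw [Finset.mem_eraseNone] at hi
    simpa using hI'J hi
  · refine le_trans ?_ hcard
    exact Finset.card_eraseNone_le _
  have hsub : a '' (Finset.eraseNone I' : Finset (Fin N)) ⊆ a '' J := by
    apply Set.image_mono
    intro i hi
    rw [Finset.mem_coe, Finset.mem_eraseNone] at hi
    simpa using hI'J hi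
  have hX : scX (scQ v' α s (a '' (Finset.eraseNone I' : Finset (Fin N)))) = x := by
    apply scX_eq _ (scQ_convex _ _ _ _)
    · exact ⟨hxQ.1, fun t ht => hxQ.2 t (hsub ht)⟩
    · intro y hy
      by_contra hlt
      push Not at hlt
      apply hne
      refine ⟨y, ?_⟩
      simp only [Set.mem_iInter]
      rintro (_ | j) ho
      · exact ⟨hy.1, by rwa [mem_ball_zero_iff]⟩
      · exact hy.2 _ ⟨j, by simpa using ho, rfl⟩
  rw [hX]
  exact ⟨hmin v hvQ, hxQ.1, fun j hj => hxQ.2 _ ⟨j, hj, rfl⟩⟩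

lemma sc_box {Ω S : Type*} [MeasurableSpace Ω] [Fintype S] [MeasurableSpace S]
    [MeasurableSingletonClass S] (γ : Measure Ω) [IsProbabilityMeasure γ] (C : Set Ω)
    (hC : MeasurableSet C) (a : Ω → S) (ha : Measurable a) (N : ℕ) (I : Finset (Fin N))
    (D : (I → S) → Set Ω) (hD : ∀ c, MeasurableSet (D c)) (hDq : ∀ c, γ.real C / 2 ≤ γ.real (D c)) :
    (Measure.pi fun _ : Fin N => γ).real
      {ω | (∀ i ∈ I, ω i ∈ C) ∧ ∀ j ∉ I, ω j ∉ D (fun i => a (ω i))} ≤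
    γ.real C ^ I.card * (1 - γ.real C / 2) ^ (N - I.card) := by
  classical
  let box : (I → S) → Set (Fin N → Ω) := fun c => Set.pi Set.univ fun j =>
    if h : j ∈ I then C ∩ a ⁻¹' {c ⟨j, h⟩} else (D c)ᶜ
  have hsub : {ω : Fin N → Ω | (∀ i ∈ I, ω i ∈ C) ∧ ∀ j ∉ I, ω j ∉ D (fun i => a (ω i))} ⊆
      ⋃ c ∈ (Finset.univ : Finset (I → S)), box c := by
    rintro ω ⟨h1, h2⟩
    simp only [Set.mem_iUnion]
    refine ⟨fun i => a (ω i), Finset.mem_univ _, ?_⟩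
    intro j _
    by_cases h : j ∈ I
    · simp [h, h1 j h]
    · simpa [h] using h2 j h
  refine (measureReal_mono hsub (measure_ne_top _ _)).trans ((measureReal_biUnion_finset_le _ _).trans ?_)
  have hbox : ∀ c, (Measure.pi fun _ : Fin N => γ).real (box c) ≤
      (∏ i : I, γ.real (C ∩ a ⁻¹' {c i})) * (1 - γ.real C / 2) ^ (N - I.card) := by
    intro c
    rw [Measure.real, Measure.pi_pi, ENNReal.toReal_prod]
    rw [← Finset.prod_mul_prod_compl I]
    apply mul_le_mul
    · rw [← Finset.prod_coe_sort I]
      apply le_of_eq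
      apply Finset.prod_congr rfl
      rintro ⟨i, hi⟩ _
      simp [hi, Measure.real]
    · have hcc : N - I.card = Iᶜ.card := by rw [Finset.card_compl, Fintype.card_fin]
      rw [hcc, ← Finset.prod_const]
      apply Finset.prod_le_prod
      · intros; positivity
      · intro j hj
        rw [Finset.mem_compl] at hj
        rw [dif_neg hj]
        change γ.real _ ≤ _
        rw [probReal_compl_eq_one_sub (hD c)]
        linarith [hDq c]
    · exact Finset.prod_nonneg fun _ _ => by positivity
    · exact Finset.prod_nonneg fun _ _ => by positivity
  refine (Finset.sum_le_sum fun c _ => hbox c).trans ?_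
  rw [← Finset.sum_mul]
  apply le_of_eq
  congr 1
  have hsum : ∑ b : S, γ.real (C ∩ a ⁻¹' {b}) = γ.real C := by
    rw [← measureReal_biUnion_finset]
    · congr 1
      ext x; simp
    · intro b _ b' _ hbb
      rw [Function.onFun, Set.disjoint_left]
      rintro x ⟨_, hx⟩ ⟨_, hx'⟩
      exact hbb (by simp at hx hx'; rw [← hx, hx'])
    · intro b _
      exact hC.inter (ha (measurableSet_singleton b))
  have := Finset.prod_univ_sum (R := ℝ) (fun _ : I => (Finset.univ : Finset S)) (fun _ b => γ.real (C ∩ a ⁻¹' {b}))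
  simp only [hsum, Fintype.piFinset_univ] at this
  rw [← this]
  simp

lemma sc_local {d : ℕ} {S : Type*} [Fintype S] [MeasurableSpace S]
    [MeasurableSingletonClass S] (a : EuclideanSpace ℝ (Fin d) → S) (ha : Measurable a)
    (e : S → EuclideanSpace ℝ (Fin d)) (δ : ℝ)
    (hδ : ∀ x : EuclideanSpace ℝ (Fin d), x ≠ 0 → ‖e (a x) - ‖x‖⁻¹ • x‖ ≤ δ)
    (v' : EuclideanSpace ℝ (Fin d)) (hv' : ‖v'‖ = 1) (σ α s : ℝ) (hσ : 0 < σ) (hα : 0 < α)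
    (hs : s + δ ≤ α * σ) (N : ℕ) :
    (Measure.pi fun _ : Fin N => stdGaussian (EuclideanSpace ℝ (Fin d))).real
      {ω | ∃ v : EuclideanSpace ℝ (Fin d), ‖v‖ = 1 ∧ α ≤ ⟪v', v⟫ ∧ ∀ j, ⟪e (a (ω j)), v⟫ < s} ≤
    4 ^ (d + 1) * (1 - (stdGaussian (EuclideanSpace ℝ (Fin d))).real (scCap v' σ) / 4) ^ N := by
  classical
  set γ := stdGaussian (EuclideanSpace ℝ (Fin d)) with hγ
  set C := scCap v' σ with hC
  set q := γ.real C with hq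
  have hq0 : 0 ≤ q := measureReal_nonneg
  have hq1 : q ≤ 1 := measureReal_le_one
  let X : (I : Finset (Fin N)) → (I → S) → EuclideanSpace ℝ (Fin d) := fun I c =>
    scX (scQ v' α s (Set.range (fun i => e (c i))))
  let D : (I : Finset (Fin N)) → (I → S) → Set (EuclideanSpace ℝ (Fin d)) := fun I c =>
    if α ≤ ⟪v', X I c⟫ then C ∩ {u | (s + δ) * ‖u‖ < ⟪X I c, u⟫} else C
  have hD : ∀ I c, MeasurableSet (D I c) := by
    intro I c
    by_cases h : α ≤ ⟪v', X I c⟫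
    · simp only [D, if_pos h]
      exact (scCap_meas _ _).inter (measurableSet_lt (by fun_prop) (by fun_prop))
    · simp only [D, if_neg h]
      exact scCap_meas _ _
  have hDq : ∀ I c, q / 2 ≤ γ.real (D I c) := by
    intro I c
    by_cases h : α ≤ ⟪v', X I c⟫
    · simp only [D, if_pos h]
      exact scCap_half v' _ hv' σ α _ hσ hα h hs
    · simp only [D, if_neg h]
      linarith
  let Ev : Finset (Fin N) → Set (Fin N → EuclideanSpace ℝ (Fin d)) := fun I =>
    {ω | (∀ i ∈ I, ω i ∈ C) ∧ ∀ j ∉ I, ω j ∉ D I (fun i => a (ω i))}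
  have hEv : ∀ I, (Measure.pi fun _ : Fin N => γ).real (Ev I) ≤ q ^ I.card * (1 - q / 2) ^ (N - I.card) :=
    fun I => sc_box γ C (scCap_meas _ _) a ha N I (D I) (hD I) (hDq I)
  set G := (Finset.univ : Finset (Finset (Fin N))).filter (fun I => I.card ≤ d + 1) with hG
  have hsub : {ω : Fin N → EuclideanSpace ℝ (Fin d) | ∃ v : EuclideanSpace ℝ (Fin d), ‖v‖ = 1 ∧ α ≤ ⟪v', v⟫ ∧ ∀ j, ⟪e (a (ω j)), v⟫ < s}
      ⊆ ⋃ I ∈ G, Ev I := by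
    rintro ω ⟨v, hv1, hvα, hvs⟩
    obtain ⟨I, hIJ, hcard, hX1, hX2, hX3⟩ := sc_helly (fun j => e (a (ω j))) v v'
      (Finset.univ.filter fun j => ω j ∈ C) α s hvα (fun j _ => (hvs j).le)
    have hXeq : X I (fun i => a (ω i)) = scX (scQ v' α s ((fun j => e (a (ω j))) '' I)) := by
      simp only [X]
      congr 2
      ext y
      simp
    rw [← hXeq] at hX1 hX2 hX3
    simp only [Set.mem_iUnion]
    refine ⟨I, by simp [hG, hcard], ?_, ?_⟩
    · intro i hi
      simpa using hIJ hi
    · intro j _ hjD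
      simp only [D, if_pos hX2] at hjD
      obtain ⟨hjC, hjx⟩ := hjD
      have h3 := hX3 j (by simp [hjC])
      set x := X I (fun i => a (ω i))
      simp only [Set.mem_ofPred_eq] at hjx
      have hne : ω j ≠ 0 := by
        intro h0
        rw [h0] at hjx
        simp at hjx
      have hpos : 0 < ‖ω j‖ := norm_pos_iff.2 hne
      have h4 : s + δ < ⟪x, ‖ω j‖⁻¹ • ω j⟫ := by
        rw [inner_smul_right, inv_mul_eq_div, lt_div_iff₀ hpos]
        exact hjx
      have h5 : |⟪x, e (a (ω j)) - ‖ω j‖⁻¹ • ω j⟫| ≤ ‖x‖ * ‖e (a (ω j)) - ‖ω j‖⁻¹ • ω j‖ :=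
        abs_real_inner_le_norm _ _
      have h6 := hδ (ω j) hne
      have h7 : ‖x‖ * ‖e (a (ω j)) - ‖ω j‖⁻¹ • ω j‖ ≤ 1 * δ := by
        apply mul_le_mul (by rw [← hv1]; exact hX1) h6 (norm_nonneg _) (by norm_num)
      rw [inner_sub_right] at h5
      rw [real_inner_comm] at h3
      have := (abs_le.1 (h5.trans h7)).1
      linarith
  refine (measureReal_mono hsub (measure_ne_top _ _)).trans ((measureReal_biUnion_finset_le _ _).trans ?_)
  have hterm : ∀ I ∈ G, (Measure.pi fun _ : Fin N => γ).real (Ev I) ≤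
      4 ^ (d + 1) * ((q / 4) ^ I.card * (1 - q / 2) ^ (N - I.card)) := by
    intro I hI
    have hcard : I.card ≤ d + 1 := by simpa [hG] using hI
    refine (hEv I).trans ?_
    rw [div_pow]
    have h4 : (4:ℝ) ^ I.card ≤ 4 ^ (d + 1) := pow_le_pow_right₀ (by norm_num) hcard
    have hp : 0 ≤ q ^ I.card * (1 - q / 2) ^ (N - I.card) := by
      have : 0 ≤ 1 - q / 2 := by linarith
      positivity
    calc _ = 4 ^ I.card * (q ^ I.card / 4 ^ I.card * (1 - q / 2) ^ (N - I.card)) := by field_simp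
      _ ≤ _ := by
        apply mul_le_mul_of_nonneg_right h4
        have : 0 ≤ 1 - q / 2 := by linarith
        positivity
  refine (Finset.sum_le_sum hterm).trans ?_
  rw [← Finset.mul_sum]
  apply mul_le_mul_of_nonneg_left _ (by positivity)
  calc _ ≤ ∑ I : Finset (Fin N), (q / 4) ^ I.card * (1 - q / 2) ^ (N - I.card) := by
        apply Finset.sum_le_sum_of_subset_of_nonneg (Finset.subset_univ _)
        intro I _ _
        have : 0 ≤ 1 - q / 2 := by linarith
        positivity
    _ = (q / 4 + (1 - q / 2)) ^ N := by
        rw [← Fin.sum_pow_mul_eq_add_pow]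
    _ = _ := by congr 1; ring

lemma sc_discretize (d : ℕ) (hd : 1 ≤ d) (δ : ℝ) (hδ : 0 < δ) :
    ∃ (m : ℕ) (a : EuclideanSpace ℝ (Fin d) → Fin (m + 1)) (e : Fin (m + 1) → EuclideanSpace ℝ (Fin d)),
      Measurable a ∧ (∀ i, ‖e i‖ = 1) ∧ ∀ x, x ≠ 0 → ‖e (a x) - ‖x‖⁻¹ • x‖ ≤ δ := by
  obtain ⟨t, hts, htf, htc⟩ := (isCompact_sphere (0 : EuclideanSpace ℝ (Fin d)) 1).finite_cover_balls hδ
  have hne : (Metric.sphere (0 : EuclideanSpace ℝ (Fin d)) 1).Nonempty := by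
    have : Nonempty (Fin d) := ⟨⟨0, hd⟩⟩
    exact NormedSpace.sphere_nonempty.2 zero_le_one
  obtain ⟨y0, hy0⟩ := hne
  obtain ⟨m, f, hf⟩ : ∃ (m : ℕ) (f : Fin m → EuclideanSpace ℝ (Fin d)), Set.range f = t := by
    have := htf.fintype
    refine ⟨Fintype.card t, fun i => ((Fintype.equivFin t).symm i : EuclideanSpace ℝ (Fin d)), ?_⟩
    rw [Set.range_comp' Subtype.val]
    simp
  let g : ℕ → EuclideanSpace ℝ (Fin d) := fun i => if h : i < m then f ⟨i, h⟩ else y0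
  have hg : ∀ i, ‖g i‖ = 1 := by
    intro i
    by_cases h : i < m
    · simp only [g, dif_pos h]
      have : f ⟨i, h⟩ ∈ t := hf ▸ Set.mem_range_self _
      simpa using hts this
    · simp only [g, dif_neg h]
      simpa using hy0
  refine ⟨m, fun x => Fin.ofNat (m + 1) (SimpleFunc.nearestPtInd g m (‖x‖⁻¹ • x)), fun i => g i, ?_, fun i => hg i, ?_⟩
  · have h1 : Measurable (fun x : EuclideanSpace ℝ (Fin d) => SimpleFunc.nearestPtInd g m (‖x‖⁻¹ • x)) :=
      (SimpleFunc.nearestPtInd g m).measurable.comp (by fun_prop)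
    exact (measurable_from_top (f := fun i : ℕ => Fin.ofNat (m + 1) i)).comp h1
  · intro x hx
    set y := ‖x‖⁻¹ • x with hy
    have hyn : ‖y‖ = 1 := by
      rw [hy, norm_smul, norm_inv, norm_norm, inv_mul_cancel₀ (norm_ne_zero_iff.2 hx)]
    have hys : y ∈ Metric.sphere (0 : EuclideanSpace ℝ (Fin d)) 1 := by simpa using hyn
    have := htc hys
    simp only [Set.mem_iUnion] at this
    obtain ⟨z, hz, hyz⟩ := this
    rw [← hf] at hz
    obtain ⟨k, rfl⟩ := hz
    have hle := SimpleFunc.nearestPtInd_le g m y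
    have h2 := SimpleFunc.edist_nearestPt_le g y (k := k) (N := m) k.2.le
    have hgk : g k = f k := by simp [g]
    have hval : ((Fin.ofNat (m + 1) (SimpleFunc.nearestPtInd g m y) : Fin (m + 1)) : ℕ) = SimpleFunc.nearestPtInd g m y := by
      rw [Fin.val_ofNat]; exact Nat.mod_eq_of_lt (by omega)
    change ‖g (Fin.ofNat (m + 1) (SimpleFunc.nearestPtInd g m y) : Fin (m + 1)) - y‖ ≤ δ
    rw [hval, ← dist_eq_norm]
    rw [hgk, SimpleFunc.nearestPt, SimpleFunc.map_apply, edist_dist, edist_dist, ENNReal.ofReal_le_ofReal_iff dist_nonneg] at h2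
    rw [Metric.mem_ball, dist_comm] at hyz
    linarith

open Classical in
lemma sc_exists {Ω ι : Type*} [MeasurableSpace Ω] (P : Measure Ω) [IsProbabilityMeasure P]
    (V : Finset ι) (B : ι → Set Ω) (p : ℝ) (hB : ∀ i ∈ V, P.real (B i) ≤ p) :
    ∃ ω, ((V.filter fun i => ω ∈ B i).card : ℝ) ≤ V.card * p := by
  obtain ⟨ω, hω⟩ := exists_le_lintegral (μ := P)
    (f := fun ω => ∑ i ∈ V, (toMeasurable P (B i)).indicator (fun _ => (1 : ENNReal)) ω)
    (Finset.measurable_sum _ fun i _ => measurable_const.indicator (measurableSet_toMeasurable _ _)).aemeasurable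
  refine ⟨ω, ?_⟩
  rw [lintegral_finsetSum _ (fun i _ => measurable_const.indicator (measurableSet_toMeasurable _ _))] at hω
  simp only [lintegral_indicator_const (measurableSet_toMeasurable _ _), measure_toMeasurable, one_mul] at hω
  have h1 : ((V.filter fun i => ω ∈ B i).card : ENNReal) ≤ ∑ i ∈ V, P (B i) := by
    refine le_trans ?_ hω
    rw [Finset.card_filter]
    push_cast
    apply Finset.sum_le_sum
    intro i _
    by_cases h : ω ∈ B i
    · simp [h, subset_toMeasurable P (B i) h]
    · simp [h]
  have h2 := ENNReal.toReal_mono (ENNReal.sum_ne_top.2 fun i _ => measure_ne_top _ _) h1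
  rw [ENNReal.toReal_natCast, ENNReal.toReal_sum fun i _ => measure_ne_top _ _] at h2
  refine h2.trans ?_
  calc _ ≤ ∑ i ∈ V, p := Finset.sum_le_sum hB
    _ = _ := by simp

lemma sc_net (n : ℕ) (hn : 1 ≤ n) (β : ℝ) (h0 : 0 < β) (h1 : β < 1) :
    ∃ V : Finset (EuclideanSpace ℝ (Fin (n+1))), (∀ v ∈ V, ‖v‖ = 1) ∧
      (V.card : ℝ) ≤ 100 * (1 + Real.sqrt n) / Real.sqrt (β / 4) ^ n ∧
      ∀ v : EuclideanSpace ℝ (Fin (n+1)), ‖v‖ = 1 → ∃ v' ∈ V, 1 - β ≤ ⟪v', v⟫ := by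
  classical
  set κ := 1 - β / 4 with hκ
  let Pr : Finset (EuclideanSpace ℝ (Fin (n+1))) → Prop := fun A =>
    (∀ v ∈ A, ‖v‖ = 1) ∧ ∀ v ∈ A, ∀ w ∈ A, v ≠ w → ⟪v, w⟫ < 1 - β
  have hsb : 0 < Real.sqrt (β / 4) := Real.sqrt_pos.2 (by linarith)
  have hb : ∀ A, Pr A → (A.card : ℝ) ≤ 100 * (1 + Real.sqrt n) / Real.sqrt (β / 4) ^ n := by
    rintro A ⟨hA1, hA2⟩
    have hdisj : (A : Set (EuclideanSpace ℝ (Fin (n+1)))).PairwiseDisjoint (fun v => scCap v κ) := by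
      intro v hv w hw hvw
      rw [Function.onFun, Set.disjoint_left]
      intro x hx1 hx2
      simp only [scCap, Set.mem_ofPred_eq] at hx1 hx2
      have hne : x ≠ 0 := by
        rintro rfl
        simp at hx1
      have hpos : 0 < ‖x‖ := norm_pos_iff.2 hne
      set u := ‖x‖⁻¹ • x with hu
      have hun : ‖u‖ = 1 := by
        rw [hu, norm_smul, norm_inv, norm_norm, inv_mul_cancel₀ hpos.ne']
      have e1 : κ < ⟪v, u⟫ := by
        rw [hu, inner_smul_right, inv_mul_eq_div, lt_div_iff₀ hpos]; exact hx1
      have e2 : κ < ⟪w, u⟫ := by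
        rw [hu, inner_smul_right, inv_mul_eq_div, lt_div_iff₀ hpos]; exact hx2
      have e3 := hA2 v hv w hw hvw
      have e4 : ‖v + w - (2:ℝ) • u‖^2 = 6 + 2 * ⟪v, w⟫ - 4 * ⟪v, u⟫ - 4 * ⟪w, u⟫ := by
        rw [norm_sub_sq_real, norm_add_sq_real, norm_smul, hA1 v hv, hA1 w hw, hun, inner_smul_right,
          inner_add_left]
        norm_num; ring
      have e5 := sq_nonneg ‖v + w - (2:ℝ) • u‖
      rw [e4] at e5
      rw [hκ] at e1 e2
      linarith
    have hsum : ∑ v ∈ A, (stdGaussian (EuclideanSpace ℝ (Fin (n+1)))).real (scCap v κ) ≤ 1 := by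
      rw [← measureReal_biUnion_finset hdisj (fun v _ => scCap_meas _ _)]
      exact measureReal_le_one
    have hlow : ∀ v ∈ A, Real.sqrt (β / 4) ^ n / (100 * (1 + Real.sqrt n)) ≤
        (stdGaussian (EuclideanSpace ℝ (Fin (n+1)))).real (scCap v κ) := by
      intro v hv
      refine le_trans ?_ (scCap_lower n hn κ (by linarith) (by linarith) v (hA1 v hv))
      have k1 : β / 4 ≤ 1 - κ^2 := by rw [hκ]; nlinarith
      have k2 : Real.sqrt n * κ ≤ Real.sqrt n := by
        have := Real.sqrt_nonneg (n:ℝ)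
        nlinarith
      have k3 : 0 ≤ κ := by linarith
      gcongr
    have := (Finset.sum_le_sum hlow).trans hsum
    rw [Finset.sum_const, nsmul_eq_mul] at this
    have hpos : 0 < 100 * (1 + Real.sqrt n) := by positivity
    rw [le_div_iff₀ (by positivity)]
    rw [mul_div_assoc', div_le_one hpos] at this
    exact this
  have hbdd : BddAbove {k : ℕ | ∃ A, Pr A ∧ A.card = k} := by
    refine ⟨⌈100 * (1 + Real.sqrt n) / Real.sqrt (β / 4) ^ n⌉₊, ?_⟩
    rintro k ⟨A, hA, rfl⟩
    exact_mod_cast (hb A hA).trans (Nat.le_ceil _)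
  have hmem := Nat.sSup_mem (s := {k : ℕ | ∃ A, Pr A ∧ A.card = k}) ⟨0, ∅, by simp [Pr], rfl⟩ hbdd
  obtain ⟨V, hV, hVc⟩ := hmem
  refine ⟨V, hV.1, hb V hV, ?_⟩
  intro v hv
  by_contra hcon
  push Not at hcon
  have hvV : v ∉ V := by
    intro h
    have := hcon v h
    rw [real_inner_self_eq_norm_sq, hv] at this
    linarith
  have hins : Pr (insert v V) := by
    constructor
    · intro w hw
      rcases Finset.mem_insert.1 hw with rfl | h
      · exact hv
      · exact hV.1 w h
    · intro w hw w' hw' hne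
      rcases Finset.mem_insert.1 hw with rfl | h
      · rcases Finset.mem_insert.1 hw' with rfl | h'
        · exact absurd rfl hne
        · rw [real_inner_comm]; exact hcon w' h'
      · rcases Finset.mem_insert.1 hw' with rfl | h'
        · exact hcon w h
        · exact hV.2 w h w' h' hne
  have := le_csSup hbdd ⟨insert v V, hins, rfl⟩
  rw [← hVc, Finset.card_insert_of_notMem hvV] at this
  omega

lemma sc_cover (n : ℕ) (hn : 1 ≤ n) (β σ s : ℝ) (h0 : 0 < β) (h1 : β < 1) (hσ0 : 0 < σ) (hσ1 : σ < 1)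
    (hs : s < (1 - β) * σ) (hsβ : s ≤ 1 - β) (N : ℕ) :
    ∃ T : Finset (EuclideanSpace ℝ (Fin (n+1))), (∀ θ ∈ T, ‖θ‖ = 1) ∧
      (T.card : ℝ) ≤ N + 100 * (1 + Real.sqrt n) / Real.sqrt (β / 4) ^ n * (4 ^ (n + 2) *
        Real.exp (-(Real.sqrt (1 - σ^2) ^ n / (100 * (1 + Real.sqrt n * σ)) * N / 4))) ∧
      ∀ v : EuclideanSpace ℝ (Fin (n+1)), ‖v‖ = 1 → ∃ θ ∈ T, s ≤ ⟪v, θ⟫ := by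
  classical
  obtain ⟨V, hV1, hVc, hVn⟩ := sc_net n hn β h0 h1
  obtain ⟨m, a, e, ha, he, hae⟩ := sc_discretize (n+1) (by omega) ((1 - β) * σ - s) (by linarith)
  set q := Real.sqrt (1 - σ^2) ^ n / (100 * (1 + Real.sqrt n * σ)) with hq
  have hloc : ∀ v' ∈ V, (Measure.pi fun _ : Fin N => stdGaussian (EuclideanSpace ℝ (Fin (n+1)))).real
      {ω | ∃ v : EuclideanSpace ℝ (Fin (n+1)), ‖v‖ = 1 ∧ 1 - β ≤ ⟪v', v⟫ ∧ ∀ j, ⟪e (a (ω j)), v⟫ < s} ≤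
      4 ^ (n + 2) * Real.exp (-(q * N / 4)) := by
    intro v' hv'
    refine (sc_local a ha e _ hae v' (hV1 v' hv') σ (1 - β) s hσ0 (by linarith) (by linarith) N).trans ?_
    have hlow := scCap_lower n hn σ hσ0 hσ1 v' (hV1 v' hv')
    rw [← hq] at hlow
    have hle : (stdGaussian (EuclideanSpace ℝ (Fin (n+1)))).real (scCap v' σ) ≤ 1 := measureReal_le_one
    set q' := (stdGaussian (EuclideanSpace ℝ (Fin (n+1)))).real (scCap v' σ)
    apply mul_le_mul_of_nonneg_left _ (by positivity)
    calc (1 - q' / 4) ^ N ≤ (Real.exp (-(q/4))) ^ N := by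
          apply pow_le_pow_left₀ (by linarith)
          have := Real.add_one_le_exp (-(q/4))
          linarith
      _ = _ := by rw [← Real.exp_nat_mul]; congr 1; ring
  obtain ⟨ω, hω⟩ := sc_exists _ V _ _ hloc
  refine ⟨Finset.univ.image (fun j => e (a (ω j))) ∪ V.filter (fun v' => ω ∈ {ω : Fin N → EuclideanSpace ℝ (Fin (n+1)) | ∃ v : EuclideanSpace ℝ (Fin (n+1)), ‖v‖ = 1 ∧ 1 - β ≤ ⟪v', v⟫ ∧ ∀ j, ⟪e (a (ω j)), v⟫ < s}), ?_, ?_, ?_⟩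
  · intro θ hθ
    rcases Finset.mem_union.1 hθ with h | h
    · obtain ⟨j, _, rfl⟩ := Finset.mem_image.1 h
      exact he _
    · exact hV1 _ (Finset.mem_filter.1 h).1
  · have c1 := Finset.card_union_le (Finset.univ.image (fun j => e (a (ω j)))) (V.filter (fun v' => ω ∈ {ω : Fin N → EuclideanSpace ℝ (Fin (n+1)) | ∃ v : EuclideanSpace ℝ (Fin (n+1)), ‖v‖ = 1 ∧ 1 - β ≤ ⟪v', v⟫ ∧ ∀ j, ⟪e (a (ω j)), v⟫ < s}))
    have c2 : (Finset.univ.image (fun j => e (a (ω j)))).card ≤ N := by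
      refine Finset.card_image_le.trans ?_
      simp
    have c3 := c1.trans (Nat.add_le_add_right c2 _)
    have c4 := (Nat.cast_le (α := ℝ)).2 c3
    rw [Nat.cast_add] at c4
    refine c4.trans ?_
    gcongr
    refine hω.trans ?_
    gcongr
  · intro v hv
    by_cases hc : ∃ j, s ≤ ⟪e (a (ω j)), v⟫
    · obtain ⟨j, hj⟩ := hc
      refine ⟨e (a (ω j)), Finset.mem_union_left _ (Finset.mem_image_of_mem _ (Finset.mem_univ _)), ?_⟩
      rw [real_inner_comm]; exact hj
    · push Not at hc
      obtain ⟨v', hv', hvv⟩ := hVn v hv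
      refine ⟨v', Finset.mem_union_right _ (Finset.mem_filter.2 ⟨hv', v, hv, hvv, hc⟩), ?_⟩
      rw [real_inner_comm]; linarith

set_option maxHeartbeats 5000000 in
lemma sc_num (n : ℕ) (hn : 1 ≤ n) (s S : ℝ) (hs0 : 0 < s) (hS0 : 0 < S) (h1 : s^2 + S^2 = 1)
    (hns : 1 < ((n:ℝ) + 1) * s^2) :
    ∃ T : Finset (EuclideanSpace ℝ (Fin (n+1))), (∀ θ ∈ T, ‖θ‖ = 1) ∧
      (T.card : ℝ) ≤ 50000 * (s / S ^ n) * ((n:ℝ) * Real.sqrt n) * Real.log (1 + n * s^2) ∧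
      ∀ v : EuclideanSpace ℝ (Fin (n+1)), ‖v‖ = 1 → ∃ θ ∈ T, s ≤ ⟪v, θ⟫ := by
  have hnR : (1:ℝ) ≤ n := by exact_mod_cast hn
  have hs1 : s < 1 := by nlinarith
  have hS1 : S < 1 := by nlinarith
  have hns2 : 1/2 ≤ (n:ℝ) * s^2 := by nlinarith
  obtain ⟨r, hr⟩ : ∃ r, r = Real.sqrt n := ⟨_, rfl⟩
  have hr2 : r^2 = n := by rw [hr]; exact Real.sq_sqrt (by positivity)
  have hr1 : 1 ≤ r := by rw [hr]; exact Real.one_le_sqrt.mpr hnR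
  have hrs : 0.7 ≤ r * s := by
    have : (0.7:ℝ)^2 ≤ (r*s)^2 := by rw [mul_pow, hr2]; linarith
    exact le_of_sq_le_sq this (by positivity)
  obtain ⟨K, hK⟩ : ∃ K, K = 1 + (n:ℝ) * s^2 := ⟨_, rfl⟩
  have hK32 : 3/2 ≤ K := by linarith
  have hK0 : 0 < K := by linarith
  obtain ⟨L, hL⟩ : ∃ L, L = Real.log K := ⟨_, rfl⟩
  have hL13 : 1/3 ≤ L := by
    have := Real.one_sub_inv_le_log_of_pos hK0
    have h2 : K⁻¹ ≤ (3/2)⁻¹ := by gcongr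
    rw [hL]; norm_num at h2; linarith
  obtain ⟨β, hβ⟩ : ∃ β, β = S^2 / (16 * K) := ⟨_, rfl⟩
  have hβ0 : 0 < β := by rw [hβ]; positivity
  have hβK : β * (16 * K) = S^2 := by rw [hβ]; field_simp
  have hβ24 : β ≤ 1/24 := by nlinarith
  have hβS : β ≤ S^2/16 := by nlinarith
  obtain ⟨σ, hσ⟩ : ∃ σ, σ = s * (1 + 2*β) := ⟨_, rfl⟩
  have hσ0 : 0 < σ := by rw [hσ]; positivity
  have hsb : s < (1 - β) * σ := by
    have : (1 - β) * σ - s = s * (β * (1 - 2*β)) := by rw [hσ]; ring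
    have : 0 < s * (β * (1 - 2*β)) := mul_pos hs0 (mul_pos hβ0 (by linarith))
    linarith
  have hsβ : s ≤ 1 - β := by nlinarith
  have hσ2 : σ^2 ≤ s^2 + 6 * β * s^2 := by
    have : s^2 + 6 * β * s^2 - σ^2 = s^2 * (β * (2 - 4 * β)) := by rw [hσ]; ring
    have : 0 ≤ s^2 * (β * (2 - 4*β)) := mul_nonneg (sq_nonneg _) (mul_nonneg hβ0.le (by linarith))
    linarith
  have hbs : 6 * β * s^2 * n ≤ S^2 / 2 := by
    have : β * (n * s^2) ≤ β * K := by gcongr; linarith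
    nlinarith
  have hni : (n:ℝ)⁻¹ * n = 1 := by field_simp
  have hni0 : 0 < (n:ℝ)⁻¹ := by positivity
  have hni1 : (n:ℝ)⁻¹ ≤ 1 := inv_le_one_of_one_le₀ hnR
  obtain ⟨t, ht⟩ : ∃ t, t = 1 - (n:ℝ)⁻¹ / 2 := ⟨_, rfl⟩
  have ht0 : 1/2 ≤ t := by linarith
  have ht1 : t ≤ 1 := by linarith
  have hbs2 : 6 * β * s^2 ≤ S^2 * (1 - t) := by
    have : 6 * β * s^2 * n * (n:ℝ)⁻¹ ≤ S^2 / 2 * (n:ℝ)⁻¹ := by gcongr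
    have e : 6 * β * s^2 * n * (n:ℝ)⁻¹ = 6 * β * s^2 := by
      rw [mul_assoc, mul_comm (n:ℝ), hni, mul_one]
    rw [e] at this
    rw [ht]; linarith
  have h1σ : S^2 * t ≤ 1 - σ^2 := by nlinarith
  have hσ1 : σ < 1 := by
    have : 0 < S^2 * t := by positivity
    nlinarith
  have hsq : S * t ≤ Real.sqrt (1 - σ^2) := by
    apply Real.le_sqrt_of_sq_le
    have : (S*t)^2 ≤ S^2 * t := by
      rw [mul_pow]
      exact mul_le_mul_of_nonneg_left (by nlinarith only [ht0, ht1]) (by positivity)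
    linarith
  have hbern : 1/2 ≤ t^n := by
    have := one_add_mul_le_pow (a := -((n:ℝ)⁻¹/2)) (by linarith) n
    have e : 1 + (n:ℝ) * (-((n:ℝ)⁻¹/2)) = 1/2 := by linarith
    rw [e] at this
    rw [ht, sub_eq_add_neg]; exact this
  have hpow : S^n / 2 ≤ Real.sqrt (1 - σ^2) ^ n := by
    have : (S*t)^n ≤ Real.sqrt (1 - σ^2) ^ n := by gcongr
    rw [mul_pow] at this
    have h3 : S^n * (1/2) ≤ S^n * t^n := by gcongr
    linarith
  have hrσ : 1 + r * σ ≤ 3 * (r * s) := by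
    have : r * σ ≤ r * s * (13/12) := by
      rw [hσ, ← mul_assoc]; gcongr; linarith
    linarith
  have hSn0 : 0 < S^n := by positivity
  have hSn1 : S^n ≤ 1 := pow_le_one₀ hS0.le hS1.le
  have hq : S^n / (600 * (r * s)) ≤ Real.sqrt (1 - σ^2) ^ n / (100 * (1 + r * σ)) := by
    have : S^n / (600 * (r * s)) = (S^n / 2) / (100 * (3 * (r * s))) := by
      field_simp; norm_num
    rw [this]
    have : 0 < 1 + r * σ := by positivity
    gcongr
  obtain ⟨N, hN⟩ : ∃ N, N = ⌈28800 * (n * r * s * L / S^n)⌉₊ := ⟨_, rfl⟩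
  have hN1 : 28800 * (n * r * s * L / S^n) ≤ N := by rw [hN]; exact Nat.le_ceil _
  have hL0 : 0 < L := by linarith
  have hN2 : (N:ℝ) ≤ 28800 * (n * r * s * L / S^n) + 1 := by
    rw [hN]; exact (Nat.ceil_lt_add_one (by positivity)).le
  have hqN : 48 * (n * L) ≤ Real.sqrt (1 - σ^2) ^ n / (100 * (1 + r * σ)) * N := by
    calc 48 * (n * L) = S^n / (600 * (r * s)) * (28800 * (n * r * s * L / S^n)) := by
          have : r ≠ 0 := by positivity
          field_simp; norm_num
      _ ≤ _ := by gcongr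
  obtain ⟨T, hT1, hT2, hT3⟩ := sc_cover n hn β σ s hβ0 (by linarith) hσ0 hσ1 hsb hsβ N
  refine ⟨T, hT1, ?_, hT3⟩
  refine hT2.trans ?_
  rw [← hr, ← hK, ← hL]
  have hexp : Real.exp (-(Real.sqrt (1 - σ^2) ^ n / (100 * (1 + r * σ)) * N / 4)) ≤ ((K^12)⁻¹)^n := by
    calc _ ≤ Real.exp (-(12 * (n * L))) := by
          apply Real.exp_le_exp.mpr; linarith
      _ = _ := by
          have : -(12 * (n * L)) = n * (-((12:ℕ) * L)) := by push_cast; ring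
          rw [this, Real.exp_nat_mul, Real.exp_neg, Real.exp_nat_mul, hL, Real.exp_log hK0]
  have hsβ4 : S / (8 * K) ≤ Real.sqrt (β / 4) := by
    apply Real.le_sqrt_of_sq_le
    rw [hβ, div_pow, mul_pow, div_div]
    gcongr S^2 / ?_
    nlinarith
  have h2n : 1 + r ≤ 2 * 2^n := by
    have : (n:ℝ) ≤ 2^n := by exact_mod_cast Nat.lt_two_pow_self.le
    have : (1:ℝ) ≤ 2^n := one_le_pow₀ (by norm_num)
    nlinarith
  have hbig : 100 * (1 + r) / Real.sqrt (β / 4) ^ n * (4 ^ (n + 2) *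
        Real.exp (-(Real.sqrt (1 - σ^2) ^ n / (100 * (1 + r * σ)) * N / 4))) ≤ 3200 / S^n := by
    calc _ ≤ 100 * (2 * 2^n) / (S / (8 * K)) ^ n * (4^(n+2) * ((K^12)⁻¹)^n) := by gcongr
      _ = 3200 * (64 * (K * (K^12)⁻¹))^n / S^n := by
          have e : (64:ℝ) = 2 * (4 * 8) := by norm_num
          rw [e, div_pow, pow_add]
          simp only [mul_pow]
          field_simp
          norm_num
      _ ≤ 3200 * 1 / S^n := by
          gcongr
          apply pow_le_one₀ (by positivity)
          have : K * (K^12)⁻¹ = (K^11)⁻¹ := by field_simp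
          rw [this]
          have h3 : ((3:ℝ)/2)^11 ≤ K^11 := by gcongr
          have : (64:ℝ) ≤ K^11 := le_trans (by norm_num) h3
          rw [← div_eq_mul_inv, div_le_one (by positivity)]; exact this
      _ = _ := by ring
  have hb : (1/5) / S^n ≤ n * r * s * L / S^n := by
    gcongr
    calc (1/5:ℝ) ≤ 1 * 0.7 * (1/3) := by norm_num
      _ ≤ n * (r * s) * L := by gcongr
      _ = _ := by ring
  have h1S : 1 ≤ 1 / S^n := by rw [le_div_iff₀ hSn0]; linarith
  have e1 : 50000 * (s / S ^ n) * (n * r) * L = 50000 * (n * r * s * L / S^n) := by ring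
  have e2 : (1/5) / S^n = (1/5) * (1 / S^n) := by ring
  have e3 : 3200 / S^n = 3200 * (1 / S^n) := by ring
  rw [e1]
  rw [e2] at hb
  rw [e3] at hbig
  linarith

/-- Spherical covering bound: there is an absolute constant `C₂ > 0` such that for every
dimension `d ≥ 2` and every `0 < ψ < arccos(d^{-1/2})`, the unit sphere `S^{d-1} ⊆ ℝ^d`
can be covered by at most `C₂·(cos ψ / sin^{d−1} ψ)·(d−1)^{3/2}·ln(1+(d−1)cos²ψ)`
spherical balls of geodesic radius `ψ`, and this bound is at most
`C₂·(√d/ψ)^{d−1}·(d−1)^{3/2}·ln d`. -/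
theorem sphere_covering_bound :
    ∃ C₂ : ℝ, 0 < C₂ ∧ ∀ d : ℕ, 2 ≤ d → ∀ ψ : ℝ, 0 < ψ →
      ψ < Real.arccos (Real.sqrt d)⁻¹ →
      (∃ T : Finset (EuclideanSpace ℝ (Fin d)), (∀ θ ∈ T, ‖θ‖ = 1) ∧
        (T.card : ℝ) ≤ C₂ * (Real.cos ψ / Real.sin ψ ^ (d - 1)) *
          ((d : ℝ) - 1) ^ ((3 : ℝ) / 2) * Real.log (1 + ((d : ℝ) - 1) * Real.cos ψ ^ 2) ∧
        ∀ v : EuclideanSpace ℝ (Fin d), ‖v‖ = 1 → ∃ θ ∈ T, Real.arccos ⟪v, θ⟫ ≤ ψ) ∧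
      C₂ * (Real.cos ψ / Real.sin ψ ^ (d - 1)) *
          ((d : ℝ) - 1) ^ ((3 : ℝ) / 2) * Real.log (1 + ((d : ℝ) - 1) * Real.cos ψ ^ 2) ≤
        C₂ * (Real.sqrt d / ψ) ^ (d - 1) * ((d : ℝ) - 1) ^ ((3 : ℝ) / 2) * Real.log d := by
  refine ⟨50000, by norm_num, ?_⟩
  intro d hd ψ hψ0 hψ
  obtain ⟨n, rfl⟩ : ∃ n, d = n + 1 := ⟨d - 1, by omega⟩
  have hn : 1 ≤ n := by omega
  have hnR : (1:ℝ) ≤ n := by exact_mod_cast hn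
  have hcast : ((n + 1 : ℕ) : ℝ) - 1 = n := by push_cast; ring
  rw [hcast, Nat.add_sub_cancel]
  have hd0 : (0:ℝ) < ((n+1 : ℕ) : ℝ) := by positivity
  have hsd : 0 < Real.sqrt ((n+1 : ℕ) : ℝ) := Real.sqrt_pos.mpr hd0
  have hinv0 : 0 < (Real.sqrt ((n+1 : ℕ) : ℝ))⁻¹ := inv_pos.mpr hsd
  have hsd1 : 1 ≤ Real.sqrt ((n+1 : ℕ) : ℝ) := Real.one_le_sqrt.mpr (by push_cast; linarith)
  have hinv1 : (Real.sqrt ((n+1 : ℕ) : ℝ))⁻¹ ≤ 1 := inv_le_one_of_one_le₀ hsd1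
  have hψ2 : ψ < Real.pi / 2 := by
    refine hψ.trans ?_
    rw [Real.arccos_lt_pi_div_two]; exact hinv0
  have hcos : (Real.sqrt ((n+1 : ℕ) : ℝ))⁻¹ < Real.cos ψ := by
    rw [← Real.cos_arccos (by linarith : -1 ≤ (Real.sqrt ((n+1 : ℕ) : ℝ))⁻¹) hinv1]
    exact Real.cos_lt_cos_of_nonneg_of_le_pi hψ0.le (Real.arccos_le_pi _) hψ
  have hs0 : 0 < Real.cos ψ := by linarith
  have hS0 : 0 < Real.sin ψ := Real.sin_pos_of_pos_of_lt_pi hψ0 (by linarith [Real.pi_pos])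
  have hns : 1 < ((n:ℝ) + 1) * Real.cos ψ ^ 2 := by
    have h2 : (Real.sqrt ((n+1 : ℕ) : ℝ))⁻¹ ^ 2 < Real.cos ψ ^ 2 := by gcongr
    rw [inv_pow, Real.sq_sqrt hd0.le, inv_lt_iff_one_lt_mul₀ hd0] at h2
    push_cast at h2; linarith
  have hrp : (n:ℝ) ^ ((3:ℝ)/2) = n * Real.sqrt n := by
    have : (3:ℝ)/2 = 1 + 1/2 := by norm_num
    rw [this, Real.rpow_add (by positivity), Real.rpow_one, Real.sqrt_eq_rpow]
  rw [hrp]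
  constructor
  · obtain ⟨T, h1, h2, h3⟩ := sc_num n hn (Real.cos ψ) (Real.sin ψ) hs0 hS0
      (by rw [add_comm]; exact Real.sin_sq_add_cos_sq ψ) hns
    refine ⟨T, h1, h2, fun v hv => ?_⟩
    obtain ⟨θ, hθ, h⟩ := h3 v hv
    refine ⟨θ, hθ, ?_⟩
    calc _ ≤ Real.arccos (Real.cos ψ) := Real.arccos_le_arccos h
      _ = ψ := Real.arccos_cos hψ0.le (by linarith [Real.pi_pos])
  · have hlog : Real.log (1 + n * Real.cos ψ ^ 2) ≤ Real.log ((n+1 : ℕ) : ℝ) := by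
      apply Real.log_le_log (by positivity)
      have : Real.cos ψ ^ 2 ≤ 1 := Real.cos_sq_le_one ψ
      push_cast; nlinarith
    have hlog0 : 0 ≤ Real.log (1 + n * Real.cos ψ ^ 2) :=
      Real.log_nonneg (by nlinarith [sq_nonneg (Real.cos ψ)])
    have htan : ψ * Real.cos ψ ≤ Real.sin ψ := by
      have := Real.le_tan hψ0.le hψ2
      rw [Real.tan_eq_sin_div_cos, le_div_iff₀ hs0] at this
      exact this
    have hkey : Real.cos ψ / Real.sin ψ ^ n ≤ (Real.sqrt ((n+1 : ℕ) : ℝ) / ψ) ^ n := by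
      rw [div_pow, div_le_div_iff₀ (by positivity) (by positivity)]
      obtain ⟨m, rfl⟩ : ∃ m, n = m + 1 := ⟨n - 1, by omega⟩
      have hm : ψ ^ m ≤ (Real.sqrt ((m+1+1 : ℕ) : ℝ) * Real.sin ψ) ^ m := by
        rcases Nat.eq_zero_or_pos m with rfl | hmp
        · simp
        · gcongr
          have h1 := Real.mul_le_sin hψ0.le hψ2.le
          have h3 : (1.6:ℝ) ≤ Real.sqrt ((m+1+1 : ℕ) : ℝ) := by
            apply Real.le_sqrt_of_sq_le
            have : (1:ℝ) ≤ m := by exact_mod_cast hmp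
            push_cast; linarith
          have hpi := Real.pi_lt_d2
          have h4 : ψ ≤ Real.pi / 2 * Real.sin ψ := by
            have : ψ = Real.pi / 2 * (2 / Real.pi * ψ) := by
              have := Real.pi_pos.ne'
              field_simp
            have h5 : Real.pi / 2 * (2 / Real.pi * ψ) ≤ Real.pi / 2 * Real.sin ψ := by
              have := Real.pi_pos
              gcongr
            linarith
          refine h4.trans ?_
          gcongr
          linarith
      calc Real.cos ψ * ψ ^ (m+1) = ψ^m * (ψ * Real.cos ψ) := by ring
        _ ≤ (Real.sqrt ((m+1+1 : ℕ) : ℝ) * Real.sin ψ) ^ m * (Real.sqrt ((m+1+1 : ℕ) : ℝ) * Real.sin ψ) := by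
            refine mul_le_mul hm ?_ (by positivity) (by positivity)
            exact htan.trans (le_mul_of_one_le_left hS0.le hsd1)
        _ = _ := by ring
    have hx : 0 ≤ Real.cos ψ / Real.sin ψ ^ n := by positivity
    gcongr
end

section
/- Let n ≥ 1 and let S be a set of n points in ℝ² in strictly convex position (every point of S is a vertex of the convex hull of S). Then the number of distinct subsets of S of the form H ∩ S, where H ranges over all closed halfspaces of ℝ², equals n² − n + 2. -/
open RealInnerProductSpace

namespace CoverCount

/-- The plane. -/
abbrev E := EuclideanSpace ℝ (Fin 2)

/-- `f` strictly separates `T` from `S \ T`. -/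
def Sep (f : E → ℝ) (S T : Finset E) : Prop :=
  (∀ x ∈ T, f x < 0) ∧ ∀ x ∈ S, x ∉ T → 0 < f x

open Classical in
/-- Subsets of `S` strictly separated from their complement by a function of `F`. -/
noncomputable def Cuts (F : Submodule ℝ (E → ℝ)) (S : Finset E) : Finset (Finset E) :=
  S.powerset.filter (fun T => ∃ f ∈ F, Sep f S T)

/-- The functions of `F` vanishing at `p`. -/
def van (F : Submodule ℝ (E → ℝ)) (p : E) : Submodule ℝ (E → ℝ) :=
  F ⊓ LinearMap.ker (LinearMap.proj (R := ℝ) (φ := fun _ : E => ℝ) p)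

lemma mem_van {F : Submodule ℝ (E → ℝ)} {p : E} {f : E → ℝ} :
    f ∈ van F p ↔ f ∈ F ∧ f p = 0 := by
  simp [van]

lemma mem_Cuts {F : Submodule ℝ (E → ℝ)} {S T : Finset E} :
    T ∈ Cuts F S ↔ T ⊆ S ∧ ∃ f ∈ F, Sep f S T := by
  simp [Cuts]

lemma perturb {f g : E → ℝ} {S T : Finset E} (hT : T ⊆ S) (h : Sep f S T) :
    ∃ t : ℝ, 0 < t ∧ Sep (f + t • g) S T ∧ Sep (f + (-t) • g) S T := by
  have key : ∀ s : ℝ, ∀ᶠ t in nhds (0 : ℝ), Sep (f + (s * t) • g) S T := by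
    intro s
    have hc : ∀ x, Filter.Tendsto (fun t : ℝ => f x + (s * t) * g x) (nhds 0) (nhds (f x)) := by
      intro x
      have : Continuous (fun t : ℝ => f x + (s * t) * g x) := by fun_prop
      simpa using this.tendsto 0
    have h1 : ∀ᶠ t in nhds (0 : ℝ), ∀ x ∈ T, f x + (s * t) * g x < 0 :=
      (Filter.eventually_all_finset T).2 fun x hx => (hc x).eventually (gt_mem_nhds (h.1 x hx))
    have h2 : ∀ᶠ t in nhds (0 : ℝ), ∀ x ∈ S, x ∉ T → 0 < f x + (s * t) * g x := by
      refine (Filter.eventually_all_finset S).2 fun x hx => ?_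
      by_cases hxT : x ∈ T
      · simp [hxT]
      · filter_upwards [(hc x).eventually (lt_mem_nhds (h.2 x hx hxT))] with t ht _ using ht
    filter_upwards [h1, h2] with t a b
    exact ⟨fun x hx => by simpa using a x hx, fun x hx hx' => by simpa using b x hx hx'⟩
  have h3 := ((key 1).and (key (-1))).filter_mono
    (nhdsWithin_le_nhds : nhdsWithin (0 : ℝ) (Set.Ioi 0) ≤ nhds 0)
  obtain ⟨t, ⟨ha, hb⟩, ht⟩ := (h3.and self_mem_nhdsWithin).exists
  exact ⟨t, ht, by simpa using ha, by simpa using hb⟩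

open Classical in
lemma card_insert {F : Submodule ℝ (E → ℝ)} {S : Finset E} {p : E} (hp : p ∉ S)
    (hg : ∃ g ∈ F, g p ≠ 0) :
    (Cuts F (insert p S)).card = (Cuts F S).card + (Cuts (van F p) S).card := by
  obtain ⟨g, hgF, hgp⟩ : ∃ g ∈ F, g p = 1 := by
    obtain ⟨g, hgF, hgp⟩ := hg
    exact ⟨(g p)⁻¹ • g, F.smul_mem _ hgF, by simp [hgp]⟩
  set A := S.powerset.filter (fun T => ∃ f ∈ F, 0 < f p ∧ Sep f S T) with hA
  set B := S.powerset.filter (fun T => ∃ f ∈ F, f p < 0 ∧ Sep f S T) with hB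
  have hU : Cuts F S = A ∪ B := by
    ext T
    simp only [mem_Cuts, hA, hB, Finset.mem_union, Finset.mem_filter, Finset.mem_powerset]
    constructor
    · rintro ⟨hT, f, hf, hs⟩
      rcases lt_trichotomy (f p) 0 with h | h | h
      · exact Or.inr ⟨hT, f, hf, h, hs⟩
      · obtain ⟨t, ht, h1, h2⟩ := perturb (g := g) hT hs
        exact Or.inl ⟨hT, _, F.add_mem hf (F.smul_mem t hgF), by simp [h, hgp, ht], h1⟩
      · exact Or.inl ⟨hT, f, hf, h, hs⟩
    · rintro (⟨hT, f, hf, _, hs⟩ | ⟨hT, f, hf, _, hs⟩) <;> exact ⟨hT, f, hf, hs⟩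
  have hI : Cuts (van F p) S = A ∩ B := by
    ext T
    simp only [mem_Cuts, hA, hB, Finset.mem_inter, Finset.mem_filter, Finset.mem_powerset]
    constructor
    · rintro ⟨hT, f, hf, hs⟩
      rw [mem_van] at hf
      obtain ⟨t, ht, h1, h2⟩ := perturb (g := g) hT hs
      exact ⟨⟨hT, _, F.add_mem hf.1 (F.smul_mem t hgF), by simp [hf.2, hgp, ht], h1⟩,
        ⟨hT, _, F.add_mem hf.1 (F.smul_mem (-t) hgF), by simp [hf.2, hgp, ht], h2⟩⟩
    · rintro ⟨⟨hT, f, hf, hfp, hs⟩, ⟨_, f', hf', hfp', hs'⟩⟩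
      refine ⟨hT, (-(f' p)) • f + (f p) • f', mem_van.2 ⟨F.add_mem (F.smul_mem _ hf)
        (F.smul_mem _ hf'), by simp; ring⟩, ?_, ?_⟩
      · intro x hx
        have h1 := hs.1 x hx
        have h2 := hs'.1 x hx
        simp only [Pi.add_apply, Pi.smul_apply, smul_eq_mul]
        nlinarith [mul_pos (neg_pos.2 hfp') (neg_pos.2 h1), mul_pos hfp (neg_pos.2 h2)]
      · intro x hx hx'
        have h1 := hs.2 x hx hx'
        have h2 := hs'.2 x hx hx'
        simp only [Pi.add_apply, Pi.smul_apply, smul_eq_mul]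
        nlinarith [mul_pos (neg_pos.2 hfp') h1, mul_pos hfp h2]
  have hC : Cuts F (insert p S) = A ∪ B.image (insert p) := by
    ext T
    simp only [mem_Cuts, hA, hB, Finset.mem_union, Finset.mem_filter, Finset.mem_powerset,
      Finset.mem_image]
    constructor
    · rintro ⟨hT, f, hf, hs⟩
      by_cases hpT : p ∈ T
      · refine Or.inr ⟨T.erase p, ⟨?_, f, hf, hs.1 p hpT, ?_, ?_⟩, Finset.insert_erase hpT⟩
        · rwa [← Finset.subset_insert_iff]
        · exact fun x hx => hs.1 x (Finset.mem_of_mem_erase hx)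
        · intro x hx hx'
          refine hs.2 x (Finset.mem_insert_of_mem hx) fun h => hx' ?_
          exact Finset.mem_erase.2 ⟨fun h => hp (h ▸ hx), h⟩
      · refine Or.inl ⟨(Finset.subset_insert_iff_of_notMem hpT).1 hT, f, hf,
          hs.2 p (Finset.mem_insert_self _ _) hpT, hs.1, ?_⟩
        exact fun x hx hx' => hs.2 x (Finset.mem_insert_of_mem hx) hx'
    · rintro (⟨hT, f, hf, hfp, hs⟩ | ⟨T', ⟨hT, f, hf, hfp, hs⟩, rfl⟩)
      · refine ⟨hT.trans (Finset.subset_insert _ _), f, hf, hs.1, ?_⟩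
        intro x hx hx'
        rcases Finset.mem_insert.1 hx with rfl | hx
        · exact hfp
        · exact hs.2 x hx hx'
      · refine ⟨Finset.insert_subset_insert _ hT, f, hf, ?_, ?_⟩
        · intro x hx
          rcases Finset.mem_insert.1 hx with rfl | hx
          · exact hfp
          · exact hs.1 x hx
        · intro x hx hx'
          simp only [Finset.mem_insert, not_or] at hx hx'
          exact hs.2 x (hx.resolve_left hx'.1) hx'.2
  have hBi : (B.image (insert p)).card = B.card := by
    apply Finset.card_image_of_injOn
    intro T hT T' hT' h
    have a : p ∉ T := fun h => hp ((Finset.mem_powerset.1 (Finset.mem_filter.1 hT).1) h)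
    have b : p ∉ T' := fun h => hp ((Finset.mem_powerset.1 (Finset.mem_filter.1 hT').1) h)
    have h' : insert p T = insert p T' := h
    rw [← Finset.erase_insert a, h', Finset.erase_insert b]
  have hD : Disjoint A (B.image (insert p)) := by
    rw [Finset.disjoint_left]
    intro T hT hT'
    obtain ⟨T', _, rfl⟩ := Finset.mem_image.1 hT'
    exact hp ((Finset.mem_powerset.1 (Finset.mem_filter.1 hT).1) (Finset.mem_insert_self _ _))
  rw [hC, hU, hI, Finset.card_union_of_disjoint hD, hBi, Finset.card_union_add_card_inter]

lemma card_empty (F : Submodule ℝ (E → ℝ)) : (Cuts F ∅).card = 1 := by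
  rw [Finset.card_eq_one]
  refine ⟨∅, ?_⟩
  ext T
  simp only [mem_Cuts, Finset.subset_empty, Finset.mem_singleton]
  constructor
  · exact fun h => h.1
  · rintro rfl
    exact ⟨rfl, 0, F.zero_mem, by simp [Sep]⟩

/-- Affine functions. -/
def Aff : Submodule ℝ (E → ℝ) where
  carrier := {f | ∃ a b c : ℝ, ∀ x : E, f x = a * x 0 + b * x 1 + c}
  zero_mem' := ⟨0, 0, 0, by simp⟩
  add_mem' := by
    rintro f g ⟨a, b, c, h⟩ ⟨a', b', c', h'⟩
    exact ⟨a + a', b + b', c + c', fun x => by simp [h, h']; ring⟩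
  smul_mem' := by
    rintro t f ⟨a, b, c, h⟩
    exact ⟨t * a, t * b, t * c, fun x => by simp [h]; ring⟩

lemma mem_Aff {f : E → ℝ} : f ∈ Aff ↔ ∃ a b c : ℝ, ∀ x : E, f x = a * x 0 + b * x 1 + c :=
  Iff.rfl

/-- The orientation determinant. -/
def orient (p q x : E) : ℝ := (q 0 - p 0) * (x 1 - p 1) - (q 1 - p 1) * (x 0 - p 0)

lemma sq_pos_of_ne {p q : E} (h : p ≠ q) : 0 < (q 0 - p 0) ^ 2 + (q 1 - p 1) ^ 2 := by
  by_contra hc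
  apply h
  have h0 : q 0 - p 0 = 0 := by nlinarith [sq_nonneg (q 0 - p 0), sq_nonneg (q 1 - p 1)]
  have h1 : q 1 - p 1 = 0 := by nlinarith [sq_nonneg (q 0 - p 0), sq_nonneg (q 1 - p 1)]
  ext i
  fin_cases i
  · simp; linarith
  · simp; linarith

lemma card_two {p q : E} (hpq : p ≠ q) {S : Finset E} (hS : S.Nonempty)
    (ho : ∀ x ∈ S, orient p q x ≠ 0) : (Cuts (van (van Aff p) q) S).card = 2 := by
  classical
  rw [Finset.card_eq_two]
  refine ⟨S.filter (fun x => orient p q x < 0), S.filter (fun x => 0 < orient p q x), ?_, ?_⟩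
  · obtain ⟨x, hx⟩ := hS
    intro h
    have := congrArg (fun T => x ∈ T) h
    simp only [Finset.mem_filter, hx, true_and, eq_iff_iff] at this
    rcases lt_or_gt_of_ne (ho x hx) with h | h
    · exact lt_asymm h (this.1 h)
    · exact lt_asymm h (this.2 h)
  · have ho' : orient p q ∈ van (van Aff p) q := by
      simp only [mem_van, mem_Aff]
      refine ⟨⟨⟨-(q 1 - p 1), q 0 - p 0, (q 1 - p 1) * p 0 - (q 0 - p 0) * p 1, fun x => ?_⟩,
        ?_⟩, ?_⟩ <;> simp only [orient] <;> ring
    ext T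
    simp only [mem_Cuts, Finset.mem_insert, Finset.mem_singleton]
    constructor
    · rintro ⟨hT, f, hf, hs⟩
      simp only [mem_van, mem_Aff] at hf
      obtain ⟨⟨⟨a, b, c, h⟩, hp⟩, hq⟩ := hf
      rw [h] at hp hq
      have hd := sq_pos_of_ne hpq
      set D := (q 0 - p 0) ^ 2 + (q 1 - p 1) ^ 2 with hD
      have hff : ∀ x, D * f x = (b * (q 0 - p 0) - a * (q 1 - p 1)) * orient p q x := by
        intro x
        rw [h, orient, hD]
        have hc : c = -(a * p 0 + b * p 1) := by linarith
        have e : a * (q 0 - p 0) + b * (q 1 - p 1) = 0 := by linarith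
        subst hc
        linear_combination ((q 0 - p 0) * (x 0 - p 0) + (q 1 - p 1) * (x 1 - p 1)) * e
      set t := b * (q 0 - p 0) - a * (q 1 - p 1) with ht
      have hiff : ∀ x ∈ S, (x ∈ T ↔ t * orient p q x < 0) := by
        intro x hx
        rw [← hff]
        constructor
        · exact fun hxT => mul_neg_of_pos_of_neg hd (hs.1 x hxT)
        · intro hlt
          by_contra hxT
          exact lt_asymm hlt (mul_pos hd (hs.2 x hx hxT))
      have ht0 : t ≠ 0 := by
        rintro h0
        obtain ⟨x, hx⟩ := hS
        have h1 := hff x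
        rw [h0, zero_mul] at h1
        have h2 : f x = 0 := by
          rcases mul_eq_zero.1 h1 with h | h
          · exact absurd h hd.ne'
          · exact h
        by_cases hxT : x ∈ T
        · exact (hs.1 x hxT).ne h2
        · exact (hs.2 x hx hxT).ne' h2
      rcases lt_or_gt_of_ne ht0 with h0 | h0
      · right
        ext x
        simp only [Finset.mem_filter]
        constructor
        · intro hx
          exact ⟨hT hx, (pos_iff_neg_of_mul_neg ((hiff x (hT hx)).1 hx)).not.1 (by linarith) |>
            fun h => by rcases lt_or_gt_of_ne (ho x (hT hx)) with h' | h'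
                        · exact absurd h' h
                        · exact h'⟩
        · rintro ⟨hx, h1⟩
          exact (hiff x hx).2 (mul_neg_of_neg_of_pos h0 h1)
      · left
        ext x
        simp only [Finset.mem_filter]
        constructor
        · intro hx
          exact ⟨hT hx, by have := (hiff x (hT hx)).1 hx; by_contra hc; nlinarith⟩
        · rintro ⟨hx, h1⟩
          exact (hiff x hx).2 (mul_neg_of_pos_of_neg h0 h1)
    · rintro (rfl | rfl)
      · refine ⟨Finset.filter_subset _ _, orient p q, ho', ?_, ?_⟩
        · intro x hx
          exact (Finset.mem_filter.1 hx).2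
        · intro x hx hx'
          simp only [Finset.mem_filter, hx, true_and, not_lt] at hx'
          exact lt_of_le_of_ne hx' (ho x hx).symm
      · refine ⟨Finset.filter_subset _ _, -orient p q, Submodule.neg_mem _ ho', ?_, ?_⟩
        · intro x hx
          simpa using (Finset.mem_filter.1 hx).2
        · intro x hx hx'
          simp only [Finset.mem_filter, hx, true_and, not_lt] at hx'
          simpa using lt_of_le_of_ne hx' (ho x hx)

/-- General position. -/
def GP (S : Finset E) : Prop :=
  ∀ p ∈ S, ∀ q ∈ S, ∀ x ∈ S, p ≠ q → p ≠ x → q ≠ x → orient p q x ≠ 0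

lemma card_one {p : E} (S : Finset E) (hp : p ∉ S) (hne : S.Nonempty)
    (ho : ∀ q ∈ S, ∀ x ∈ S, q ≠ x → orient p q x ≠ 0) :
    (Cuts (van Aff p) S).card = 2 * S.card := by
  classical
  induction S using Finset.induction_on with
  | empty => simp at hne
  | insert q S hq ih =>
    have hpq : p ≠ q := fun h => hp (by simp [h])
    have hpS : p ∉ S := fun h => hp (by simp [h])
    have hg : ∃ g ∈ van Aff p, g q ≠ 0 := by
      refine ⟨fun x => (q 0 - p 0) * (x 0 - p 0) + (q 1 - p 1) * (x 1 - p 1), ?_, ?_⟩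
      · simp only [mem_van, mem_Aff]
        refine ⟨⟨q 0 - p 0, q 1 - p 1, -((q 0 - p 0) * p 0 + (q 1 - p 1) * p 1),
          fun x => by ring⟩, by ring⟩
      · have := sq_pos_of_ne hpq
        simp only
        nlinarith
    rw [card_insert hq hg, Finset.card_insert_of_notMem hq]
    rcases S.eq_empty_or_nonempty with rfl | hS
    · simp [card_empty]
    · rw [ih hpS hS fun a ha b hb => ho a (by simp [ha]) b (by simp [hb]),
        card_two hpq hS fun x hx => ho q (by simp) x (by simp [hx]) fun h => hq (h ▸ hx)]
      ring

lemma card_zero (S : Finset E) (hne : S.Nonempty) (ho : GP S) :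
    (Cuts Aff S).card + S.card = S.card ^ 2 + 2 := by
  classical
  induction S using Finset.induction_on with
  | empty => simp at hne
  | insert p S hp ih =>
    have hg : ∃ g ∈ Aff, g p ≠ 0 := ⟨fun _ => 1, ⟨0, 0, 1, by simp⟩, by simp⟩
    rw [card_insert hp hg, Finset.card_insert_of_notMem hp]
    rcases S.eq_empty_or_nonempty with rfl | hS
    · simp [card_empty]
    · have := ih hS fun a ha b hb c hc =>
        ho a (by simp [ha]) b (by simp [hb]) c (by simp [hc])
      rw [card_one S hp hS fun a ha b hb hab => ho p (by simp) a (by simp [ha]) b (by simp [hb])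
        (fun h => hp (h ▸ ha)) (fun h => hp (h ▸ hb)) hab]
      nlinarith

lemma gp_of_conv (S : Finset E)
    (hconv : ∀ p ∈ S, p ∉ convexHull ℝ ((S : Set E) \ {p})) : GP S := by
  intro p hp q hq x hx hpq hpx hqx h0
  have hcol : Collinear ℝ ({p, q, x} : Set E) := by
    rw [collinear_iff_of_mem (p₀ := p) (by simp)]
    refine ⟨q - p, ?_⟩
    have hd := sq_pos_of_ne hpq
    intro r hr
    simp only [Set.mem_insert_iff, Set.mem_singleton_iff] at hr
    rcases hr with rfl | rfl | rfl
    · exact ⟨0, by simp⟩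
    · exact ⟨1, by simp⟩
    · refine ⟨((q 0 - p 0) * (r 0 - p 0) + (q 1 - p 1) * (r 1 - p 1)) /
        ((q 0 - p 0) ^ 2 + (q 1 - p 1) ^ 2), ?_⟩
      unfold orient at h0
      ext i
      fin_cases i
      · simp
        field_simp
        linear_combination (-(q 1 - p 1)) * h0
      · simp
        field_simp
        linear_combination (q 0 - p 0) * h0
  have key : ∀ a ∈ S, ∀ b ∈ S, ∀ c ∈ S, a ≠ b → c ≠ b → ¬ Wbtw ℝ a b c := by
    intro a ha b hb c hc hab hcb h
    refine hconv b hb ?_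
    have h1 : b ∈ segment ℝ a c := mem_segment_iff_wbtw.2 h
    exact segment_subset_convexHull (by simp [ha, hab]) (by simp [hc, hcb]) h1
  rcases hcol.wbtw_or_wbtw_or_wbtw with h | h | h
  · exact key _ hp _ hq _ hx hpq hqx.symm h
  · exact key _ hq _ hx _ hp hqx hpx h
  · exact key _ hx _ hp _ hq hpx.symm hpq.symm h

lemma mem_iff (S T : Finset E) :
    (∃ v : E, v ≠ 0 ∧ ∃ c : ℝ, T = S.filter (fun x => ⟪x, v⟫ ≤ c)) ↔ T ∈ Cuts Aff S := by
  classical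
  rw [mem_Cuts]
  have hin : ∀ x v : E, ⟪x, v⟫ = v 0 * x 0 + v 1 * x 1 := by
    intro x v
    simp [PiLp.inner_apply, Fin.sum_univ_two]
  constructor
  · rintro ⟨v, -, c, rfl⟩
    refine ⟨Finset.filter_subset _ _, ?_⟩
    have : ∃ ε > 0, ∀ x ∈ S, c < ⟪x, v⟫ → c + ε < ⟪x, v⟫ := by
      have h3 : ∀ᶠ t in nhdsWithin (0 : ℝ) (Set.Ioi 0), ∀ x ∈ S, c < ⟪x, v⟫ → c + t < ⟪x, v⟫ := by
        refine (Filter.eventually_all_finset S).2 fun x hx => ?_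
        by_cases h : c < ⟪x, v⟫
        · have hc : Filter.Tendsto (fun t : ℝ => c + t) (nhds 0) (nhds c) := by
            have : Continuous (fun t : ℝ => c + t) := by fun_prop
            simpa using this.tendsto 0
          filter_upwards [nhdsWithin_le_nhds (hc.eventually (gt_mem_nhds h))] with t ht _ using ht
        · simp [h]
      obtain ⟨t, h, ht⟩ := (h3.and self_mem_nhdsWithin).exists
      exact ⟨t, ht, h⟩
    obtain ⟨ε, hε, h⟩ := this
    refine ⟨fun x => ⟪x, v⟫ - (c + ε), mem_Aff.2 ⟨v 0, v 1, -(c + ε), fun x => by rw [hin]; ring⟩,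
      ?_, ?_⟩
    · intro x hx
      have := (Finset.mem_filter.1 hx).2
      simp only
      linarith
    · intro x hx hx'
      simp only [Finset.mem_filter, hx, true_and, not_le] at hx'
      have := h x hx hx'
      simp only
      linarith
  · rintro ⟨hT, f, hf, hs⟩
    -- reduce to a nonzero linear part by perturbation
    obtain ⟨f, a, b, c, hne, hf, hs⟩ : ∃ f : E → ℝ, ∃ a b c : ℝ, (a ≠ 0 ∨ b ≠ 0) ∧
        (∀ x : E, f x = a * x 0 + b * x 1 + c) ∧ Sep f S T := by
      obtain ⟨a, b, c, hf⟩ := hf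
      by_cases ha : a = 0
      · obtain ⟨t, ht, h1, -⟩ := perturb (g := fun x => x 0) hT hs
        exact ⟨_, t, b, c, Or.inl ht.ne', fun x => by simp [hf, ha]; ring, h1⟩
      · exact ⟨f, a, b, c, Or.inl ha, hf, hs⟩
    refine ⟨!₂[a, b], ?_, -c, ?_⟩
    · intro h
      have h0 := congrArg (fun v : E => v 0) h
      have h1 := congrArg (fun v : E => v 1) h
      simp at h0 h1
      tauto
    · ext x
      simp only [Finset.mem_filter, hin]
      constructor
      · intro hx
        have := hs.1 x hx
        rw [hf] at this
        refine ⟨hT hx, ?_⟩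
        simp
        linarith
      · rintro ⟨hx, h⟩
        by_contra hxT
        have := hs.2 x hx hxT
        rw [hf] at this
        simp at h
        linarith

end CoverCount

/-- For a set `S` of `n ≥ 1` points of `ℝ²` in strictly convex position, the number of
distinct subsets of `S` cut off by closed halfspaces is exactly `n² − n + 2`. -/
theorem card_halfspace_subsets_convex_position {n : ℕ} (hn : 1 ≤ n)
    (S : Finset (EuclideanSpace ℝ (Fin 2))) (hcard : S.card = n)
    (hconv : ∀ p ∈ S, p ∉ convexHull ℝ ((S : Set (EuclideanSpace ℝ (Fin 2))) \ {p})) :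
    {T : Finset (EuclideanSpace ℝ (Fin 2)) | ∃ v : EuclideanSpace ℝ (Fin 2), v ≠ 0 ∧
      ∃ c : ℝ, T = S.filter (fun x => ⟪x, v⟫ ≤ c)}.ncard = n ^ 2 - n + 2 := by
  have hset : {T : Finset (EuclideanSpace ℝ (Fin 2)) | ∃ v : EuclideanSpace ℝ (Fin 2), v ≠ 0 ∧
      ∃ c : ℝ, T = S.filter (fun x => ⟪x, v⟫ ≤ c)} = (CoverCount.Cuts CoverCount.Aff S : Set _) := by
    ext T
    exact CoverCount.mem_iff S T
  rw [hset, Set.ncard_coe_finset]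
  have h := CoverCount.card_zero S (Finset.card_pos.1 (by omega)) (CoverCount.gp_of_conv S hconv)
  rw [hcard] at h
  have : n ≤ n ^ 2 := Nat.le_self_pow (by norm_num) n
  omega
end
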